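/- arXiv:1503.01284 — 3 statements merged into one kernel-verified Lean document; each statement's English description precedes it below -/
import Mathlib

section
/- Let n ≥ 2, let E ⊂ ℝⁿ be a non-empty Borel set with dim_H E > 1, and let A ⊂ ℝⁿ be a Borel set such that for every p ∈ E the intersection L(p) ∩ A has positive (n−1)-dimensional measure (i.e. 𝓗^{n−1}(L(p) ∩ A) > 0). Then 𝓛ⁿ(L(E) ∩ A) > 0. -/
open MeasureTheory RealInnerProductSpace

/-- The non-vertical hyperplane `L(a,b) = {(x,y) : y = a·x + b}` in `ℝⁿ = ℝ^{n−1} × ℝ`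
associated to the point `p = (a,b)`. -/
def hyperplane {n : ℕ} (p : EuclideanSpace ℝ (Fin (n - 1)) × ℝ) :
    Set (EuclideanSpace ℝ (Fin (n - 1)) × ℝ) :=
  {q | q.2 = ⟪p.1, q.1⟫ + p.2}

/-- `L(E) = ⋃_{p ∈ E} L(p)`, the union of the hyperplanes parametrized by `E`. -/
def hyperplaneUnion {n : ℕ} (E : Set (EuclideanSpace ℝ (Fin (n - 1)) × ℝ)) :
    Set (EuclideanSpace ℝ (Fin (n - 1)) × ℝ) :=
  ⋃ p ∈ E, hyperplane p

section helpers

open Set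

/-- s-dimensional Hausdorff content. -/
noncomputable def hcontent {X : Type*} [MetricSpace X] (s : ℝ) (hs : 0 < s) : OuterMeasure X :=
  OuterMeasure.ofFunction (fun t => (Metric.ediam t) ^ s) (by simp [hs])

lemma hausdorff_zero_of_hcontent {X : Type*} [MetricSpace X] [MeasurableSpace X] [BorelSpace X]
    (s : ℝ) (hs : 0 < s) (S : Set X) (h : hcontent s hs S = 0) : μH[s] S = 0 := by
  have h1 : ∀ k : ℕ, ∃ t : ℕ → Set X, S ⊆ ⋃ i, t i ∧
      ∑' i, (Metric.ediam (t i)) ^ s < ((k : ENNReal) + 1)⁻¹ := by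
    intro k
    have h2 : hcontent s hs S < ((k : ENNReal) + 1)⁻¹ := by
      rw [h]; simp
    unfold hcontent at h2
    rw [OuterMeasure.ofFunction_apply] at h2
    simp only [iInf_lt_iff] at h2
    obtain ⟨t, ht, h3⟩ := h2
    exact ⟨t, ht, h3⟩
  choose t ht ht2 using h1
  have hlim : Filter.Tendsto (fun k : ℕ => ((k : ENNReal) + 1)⁻¹) Filter.atTop (nhds 0) := by
    have := (Filter.tendsto_add_atTop_iff_nat 1).2 ENNReal.tendsto_inv_nat_nhds_zero
    simpa using this
  have hlim2 : Filter.Tendsto (fun k : ℕ => (((k : ENNReal) + 1)⁻¹) ^ (1 / s)) Filter.atTop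
      (nhds 0) := by
    have := hlim.ennrpow_const (1 / s)
    simpa [hs] using this
  have h4 := Measure.hausdorffMeasure_le_liminf_tsum (ι := fun _ : ℕ => ℕ) s S
    (l := Filter.atTop) _ hlim2 t ?_ ?_
  · refine le_antisymm (h4.trans ?_) (zero_le)
    refine (Filter.liminf_le_liminf (v := fun k : ℕ => ((k : ENNReal) + 1)⁻¹) ?_).trans ?_
    · exact Filter.Eventually.of_forall fun k => (ht2 k).le
    · rw [hlim.liminf_eq]
  · refine Filter.Eventually.of_forall fun k i => ?_
    have h5 : (Metric.ediam (t k i)) ^ s ≤ ((k : ENNReal) + 1)⁻¹ :=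
      (ENNReal.le_tsum i).trans (ht2 k).le
    have h6 := ENNReal.rpow_le_rpow h5 (z := 1 / s) (by positivity)
    rwa [← ENNReal.rpow_mul, mul_one_div_cancel hs.ne', ENNReal.rpow_one] at h6
  · exact Filter.Eventually.of_forall fun k => ht k

open Classical in
lemma greedy {X ι : Type*} (T₀ : Finset X) (I : Finset ι) (B : ι → Set X) (κ : ι → ℝ)
    (hκ : ∀ c ∈ I, 0 ≤ κ c) (hcov : ∀ p ∈ T₀, ∃ c ∈ I, p ∈ B c) :
    ∃ w : X → ℝ, (∀ p, 0 ≤ w p) ∧ (∀ c ∈ I, ∑ p ∈ T₀ with p ∈ B c, w p ≤ κ c) ∧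
      ∀ p ∈ T₀, ∃ c ∈ I, p ∈ B c ∧ κ c ≤ ∑ p ∈ T₀ with p ∈ B c, w p := by
  suffices H : ∀ T : Finset X, T ⊆ T₀ →
      ∃ w : X → ℝ, (∀ p, 0 ≤ w p) ∧ (∀ c ∈ I, ∑ p ∈ T₀ with p ∈ B c, w p ≤ κ c) ∧
      ∀ p ∈ T, ∃ c ∈ I, p ∈ B c ∧ κ c ≤ ∑ p ∈ T₀ with p ∈ B c, w p from H T₀ subset_rfl
  intro T
  induction T using Finset.induction_on with
  | empty => 
    intro _
    exact ⟨fun _ => 0, by simp, by simpa using hκ, by simp⟩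
  | insert a T ha ih =>
    intro hT
    obtain ⟨w, w0, wf, ws⟩ := ih ((Finset.subset_insert _ _).trans hT)
    have haT : a ∈ T₀ := hT (Finset.mem_insert_self _ _)
    obtain ⟨c₀, hc₀, hac₀⟩ := hcov a haT
    obtain ⟨c, hc, hmin⟩ := Finset.exists_min_image (I.filter (fun c => a ∈ B c))
      (fun c => κ c - ∑ p ∈ T₀ with p ∈ B c, w p) ⟨c₀, by simp [hc₀, hac₀]⟩
    simp only [Finset.mem_filter] at hc hmin
    set σ := κ c - ∑ p ∈ T₀ with p ∈ B c, w p with hσ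
    have hσ0 : 0 ≤ σ := by have := wf c hc.1; linarith
    have key : ∀ c', ∑ p ∈ T₀ with p ∈ B c', (w p + if p = a then σ else 0) =
        (∑ p ∈ T₀ with p ∈ B c', w p) + if a ∈ B c' then σ else 0 := by
      intro c'
      rw [Finset.sum_add_distrib, Finset.sum_ite_eq']
      simp [haT]
    refine ⟨fun p => w p + if p = a then σ else 0, ?_, ?_, ?_⟩
    · intro p; have := w0 p; dsimp only; split_ifs <;> linarith
    · intro c' hc'
      rw [key]
      split_ifs with h
      · have := hmin c' ⟨hc', h⟩
        linarith
      · simpa using wf c' hc'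
    · intro p hp
      rcases Finset.mem_insert.1 hp with rfl | hp
      · refine ⟨c, hc.1, hc.2, ?_⟩
        rw [key, if_pos hc.2]; linarith
      · obtain ⟨c', h1, h2, h3⟩ := ws p hp
        refine ⟨c', h1, h2, ?_⟩
        rw [key]; split_ifs <;> linarith

open Classical in
lemma frostman {X : Type*} [MetricSpace X] (s : ℝ) (hs : 0 < s) (S : Set X) (m : ℕ)
    (T : Finset X) (hST : S ⊆ ⋃ p ∈ T, Metric.closedBall p ((1 / 2 : ℝ) ^ m)) :
    ∃ w : X → ℝ, (∀ p, 0 ≤ w p) ∧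
      (∀ q ∈ T, ∀ i ≤ m, ∑ p ∈ T with dist p q ≤ (1 / 2 : ℝ) ^ i, w p ≤ ((1 / 2 : ℝ) ^ i) ^ s) ∧
      hcontent s hs S ≤ ENNReal.ofReal (12 ^ s * ∑ p ∈ T, w p) := by
  obtain ⟨w, w0, wf, ws⟩ := greedy T (T ×ˢ Finset.range (m + 1))
    (fun c : X × ℕ => Metric.closedBall c.1 ((1 / 2 : ℝ) ^ c.2))
    (fun c => ((1 / 2 : ℝ) ^ c.2) ^ s) (fun c _ => by positivity)
    (fun p hp => ⟨(p, 0), by simp [hp], by simp⟩)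
  refine ⟨w, w0, ?_, ?_⟩
  · intro q hq i hi
    exact wf (q, i) (by simp [hq]; omega)
  set t : Set (X × ℕ) := {c | c ∈ T ×ˢ Finset.range (m + 1) ∧
    ((1 / 2 : ℝ) ^ c.2) ^ s ≤ ∑ p ∈ T with p ∈ Metric.closedBall c.1 ((1 / 2 : ℝ) ^ c.2), w p}
    with ht
  obtain ⟨u, hut, hud, hucov⟩ :=
    Vitali.exists_disjoint_subfamily_covering_enlargement_closedBall t (fun c => c.1)
      (fun c => (1 / 2 : ℝ) ^ c.2) 1 (fun c _ => pow_le_one₀ (by norm_num) (by norm_num)) 5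
      (by norm_num)
  have hufin : u.Finite := (Finset.finite_toSet (T ×ˢ Finset.range (m + 1))).subset
    (fun c hc => (hut hc).1)
  lift u to Finset (X × ℕ) using hufin
  have hcov : S ⊆ ⋃ c ∈ u, Metric.closedBall c.1 (6 * (1 / 2 : ℝ) ^ c.2) := by
    intro x hx
    have h1 := hST hx
    simp only [mem_iUnion] at h1
    obtain ⟨p, hp, hxp⟩ := h1
    obtain ⟨c, hc, hpc, hsat⟩ := ws p hp
    obtain ⟨b, hb, hcb⟩ := hucov c ⟨hc, hsat⟩
    have h2 := hcb hpc
    simp only [mem_iUnion]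
    refine ⟨b, hb, ?_⟩
    have hbm : b.2 ≤ m := by
      have := (hut hb).1
      simp only [Finset.mem_product, Finset.mem_range] at this
      omega
    have h3 : (1 / 2 : ℝ) ^ m ≤ (1 / 2 : ℝ) ^ b.2 :=
      pow_le_pow_of_le_one (by norm_num) (by norm_num) hbm
    rw [Metric.mem_closedBall] at h2 hxp ⊢
    have := dist_triangle x p b.1
    linarith
  have hball : ∀ c ∈ u, hcontent s hs (Metric.closedBall c.1 (6 * (1 / 2 : ℝ) ^ c.2)) ≤
      ENNReal.ofReal (12 ^ s * ∑ p ∈ T with p ∈ Metric.closedBall c.1 ((1 / 2 : ℝ) ^ c.2), w p) := by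
    intro c hc
    refine (OuterMeasure.ofFunction_le _).trans ?_
    have h1 : Metric.ediam (Metric.closedBall c.1 (6 * (1 / 2 : ℝ) ^ c.2)) ≤
        ENNReal.ofReal (12 * (1 / 2 : ℝ) ^ c.2) := by
      refine Metric.ediam_le fun x hx y hy => ?_
      rw [edist_dist]
      refine ENNReal.ofReal_le_ofReal ?_
      rw [Metric.mem_closedBall] at hx hy
      have := dist_triangle_right x y c.1
      linarith
    refine (ENNReal.rpow_le_rpow h1 hs.le).trans ?_
    rw [ENNReal.ofReal_rpow_of_nonneg (by positivity) hs.le]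
    refine ENNReal.ofReal_le_ofReal ?_
    rw [Real.mul_rpow (by norm_num) (by positivity)]
    exact mul_le_mul_of_nonneg_left (hut hc).2 (by positivity)
  calc hcontent s hs S ≤ hcontent s hs (⋃ c ∈ u, Metric.closedBall c.1 (6 * (1 / 2 : ℝ) ^ c.2)) :=
        measure_mono hcov
    _ ≤ ∑ c ∈ u, hcontent s hs (Metric.closedBall c.1 (6 * (1 / 2 : ℝ) ^ c.2)) :=
        measure_biUnion_finset_le _ _
    _ ≤ ∑ c ∈ u, ENNReal.ofReal
          (12 ^ s * ∑ p ∈ T with p ∈ Metric.closedBall c.1 ((1 / 2 : ℝ) ^ c.2), w p) :=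
        Finset.sum_le_sum hball
    _ = ENNReal.ofReal (12 ^ s * ∑ c ∈ u,
          ∑ p ∈ T with p ∈ Metric.closedBall c.1 ((1 / 2 : ℝ) ^ c.2), w p) := by
        rw [Finset.mul_sum, ENNReal.ofReal_sum_of_nonneg]
        intro c _
        exact mul_nonneg (by positivity) (Finset.sum_nonneg fun p _ => w0 p)
    _ ≤ _ := by
        refine ENNReal.ofReal_le_ofReal (mul_le_mul_of_nonneg_left ?_ (by positivity))
        rw [← Finset.sum_biUnion]
        · refine Finset.sum_le_sum_of_subset_of_nonneg ?_ (fun p _ _ => w0 p)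
          intro p hp
          simp only [Finset.mem_biUnion, Finset.mem_filter] at hp
          exact hp.choose_spec.2.1
        · intro c hc c' hc' hne
          rw [Function.onFun, Finset.disjoint_left]
          intro p hp hp'
          simp only [Finset.mem_filter] at hp hp'
          exact Set.disjoint_left.1 (hud hc hc' hne) hp.2 hp'.2

section slabs

variable {V : Type*} [NormedAddCommGroup V] [InnerProductSpace ℝ V] [FiniteDimensional ℝ V]
  [MeasureSpace V] [BorelSpace V] [(volume : Measure V).IsAddHaarMeasure]

/-- The part of a slab inside a ball. -/
def slab (R : ℝ) (a : V) (b δ : ℝ) : Set V :=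
  {x | x ∈ Metric.closedBall (0 : V) R ∧ |⟪a, x⟫ + b| ≤ 2 * δ}

lemma measurableSet_slab (R : ℝ) (a : V) (b δ : ℝ) : MeasurableSet (slab R a b δ) := by
  refine IsClosed.measurableSet ?_
  refine IsClosed.inter Metric.isClosed_closedBall ?_
  exact isClosed_le (f := fun x : V => |⟪a, x⟫ + b|) (g := fun _ => 2 * δ) (by fun_prop) (by fun_prop)

lemma strip_le (R : ℝ) (a : V) (b δ : ℝ) (ha : a ≠ 0) (hδ : 0 < δ) :
    volume (slab R a b δ) ≤
      volume (Metric.closedBall (0 : V) (R + 1)) * ENNReal.ofReal (5 * δ / ‖a‖) := by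
  have hna : 0 < ‖a‖ := norm_pos_iff.2 ha
  set N : ℕ := ⌊‖a‖ / (5 * δ)⌋₊ with hN
  set v : ℕ → V := fun k => (-(5 * δ * k / ‖a‖ / ‖a‖)) • a with hv
  have hav : ∀ k, ⟪a, v k⟫ = -(5 * δ * k) := by
    intro k
    simp only [hv, inner_smul_right, real_inner_self_eq_norm_sq]
    field_simp
  have hnv : ∀ k ≤ N, ‖v k‖ ≤ 1 := by
    intro k hk
    have h1 : (k : ℝ) ≤ ‖a‖ / (5 * δ) :=
      (Nat.cast_le.2 hk).trans (Nat.floor_le (by positivity))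
    rw [le_div_iff₀ (by positivity)] at h1
    simp only [hv, norm_smul, norm_neg, Real.norm_eq_abs]
    rw [abs_of_nonneg (by positivity), div_mul_cancel₀ _ hna.ne', div_le_one hna]
    linarith
  have hdisj : (↑(Finset.range (N + 1)) : Set ℕ).PairwiseDisjoint
      (fun k => (fun x => x + v k) ⁻¹' slab R a b δ) := by
    intro k _ l _ hkl
    rw [Function.onFun, Set.disjoint_left]
    intro x hx hx'
    have h1 := abs_le.1 hx.2
    have h2 := abs_le.1 hx'.2
    simp only [inner_add_right, hav] at h1 h2
    rcases Nat.lt_or_gt_of_ne hkl with h | h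
    · have h3 : (k : ℝ) + 1 ≤ l := by exact_mod_cast h
      nlinarith
    · have h3 : (l : ℝ) + 1 ≤ k := by exact_mod_cast h
      nlinarith
  have hsub : (⋃ k ∈ Finset.range (N + 1), (fun x => x + v k) ⁻¹' slab R a b δ) ⊆
      Metric.closedBall (0 : V) (R + 1) := by
    intro x hx
    simp only [mem_iUnion] at hx
    obtain ⟨k, hk, hx⟩ := hx
    have h1 := hx.1
    have h2 := hnv k (by simp at hk; omega)
    rw [mem_closedBall_zero_iff] at h1 ⊢
    have h3 : x = (x + v k) - v k := by abel
    rw [h3]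
    exact (norm_sub_le _ _).trans (by linarith)
  have h1 : ((N + 1 : ℕ) : ENNReal) * volume (slab R a b δ) ≤
      volume (Metric.closedBall (0 : V) (R + 1)) := by
    refine le_trans (le_of_eq ?_) (measure_mono hsub)
    rw [measure_biUnion_finset hdisj]
    · simp [measure_preimage_add_right]
    · intro k _
      exact (measurableSet_slab R a b δ).preimage (by fun_prop)
  have h2 : 1 ≤ ENNReal.ofReal (5 * δ / ‖a‖) * ((N + 1 : ℕ) : ENNReal) := by
    rw [← ENNReal.ofReal_natCast, ← ENNReal.ofReal_mul (by positivity), ENNReal.one_le_ofReal]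
    have h3 : ‖a‖ / (5 * δ) ≤ (N + 1 : ℕ) := by
      push_cast
      exact (Nat.lt_floor_add_one _).le
    calc (1 : ℝ) = 5 * δ / ‖a‖ * (‖a‖ / (5 * δ)) := by field_simp
      _ ≤ _ := mul_le_mul_of_nonneg_left h3 (by positivity)
  calc volume (slab R a b δ) = 1 * volume (slab R a b δ) := (one_mul _).symm
    _ ≤ (ENNReal.ofReal (5 * δ / ‖a‖) * ((N + 1 : ℕ) : ENNReal)) * volume (slab R a b δ) := by
        gcongr
    _ = ENNReal.ofReal (5 * δ / ‖a‖) * (((N + 1 : ℕ) : ENNReal) * volume (slab R a b δ)) := by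
        ring
    _ ≤ _ := by rw [mul_comm]; gcongr

lemma slab_le (R : ℝ) (hR : 1 ≤ R) : ∃ C : ℝ, 0 ≤ C ∧
    (∀ (a : V) (b δ : ℝ), volume (slab R a b δ) ≤ ENNReal.ofReal C) ∧
    ∀ (a : V) (b δ ρ : ℝ), 0 < δ → 0 < ρ → ρ ≤ max ‖a‖ |b| →
      volume (slab R a b δ) ≤ ENNReal.ofReal (C * δ / ρ) := by
  set M : ℝ := (volume (Metric.closedBall (0 : V) (R + 1))).toReal with hM
  have hMt : volume (Metric.closedBall (0 : V) (R + 1)) = ENNReal.ofReal M := by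
    rw [hM, ENNReal.ofReal_toReal]
    exact measure_closedBall_lt_top.ne
  have hM0 : 0 ≤ M := ENNReal.toReal_nonneg
  have hall : ∀ (a : V) (b δ : ℝ), volume (slab R a b δ) ≤ ENNReal.ofReal M := by
    intro a b δ
    rw [← hMt]
    exact measure_mono fun x hx => Metric.closedBall_subset_closedBall (by linarith) hx.1
  have hst : ∀ (a : V) (b δ ρ : ℝ), 0 < δ → 0 < ρ → ρ ≤ 2 * R * ‖a‖ →
      volume (slab R a b δ) ≤ ENNReal.ofReal (10 * R * M * δ / ρ) := by
    intro a b δ ρ hδ hρ h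
    have hna : 0 < ‖a‖ := by
      by_contra h0
      have : ‖a‖ = 0 := le_antisymm (not_lt.1 h0) (norm_nonneg _)
      rw [this] at h; linarith
    refine (strip_le R a b δ (norm_pos_iff.1 hna) hδ).trans ?_
    rw [hMt, ← ENNReal.ofReal_mul hM0]
    refine ENNReal.ofReal_le_ofReal ?_
    rw [le_div_iff₀ hρ]
    calc M * (5 * δ / ‖a‖) * ρ ≤ M * (5 * δ / ‖a‖) * (2 * R * ‖a‖) := by gcongr
      _ = 10 * R * M * δ := by field_simp; ring
  refine ⟨10 * R * M, by positivity, ?_, ?_⟩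
  · intro a b δ
    refine (hall a b δ).trans (ENNReal.ofReal_le_ofReal ?_)
    nlinarith
  · intro a b δ ρ hδ hρ h
    by_cases h1 : ρ ≤ 2 * R * ‖a‖
    · exact hst a b δ ρ hδ hρ h1
    have h2 : ρ ≤ |b| := by
      rcases le_max_iff.1 h with h3 | h3
      · exfalso; apply h1; nlinarith [norm_nonneg a]
      · exact h3
    by_cases h4 : ρ ≤ 4 * δ
    · refine (hall a b δ).trans (ENNReal.ofReal_le_ofReal ?_)
      rw [le_div_iff₀ hρ]
      calc M * ρ ≤ M * (4 * δ) := by gcongr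
        _ ≤ 10 * R * M * δ := by nlinarith [mul_nonneg hM0 hδ.le]
    · have : slab R a b δ = ∅ := by
        ext x
        simp only [mem_empty_iff_false, iff_false]
        rintro ⟨hx1, hx2⟩
        rw [mem_closedBall_zero_iff] at hx1
        have h5 : |⟪a, x⟫| ≤ ‖a‖ * R :=
          (abs_real_inner_le_norm a x).trans (by gcongr)
        have h6 : |b| ≤ |⟪a, x⟫ + b| + |⟪a, x⟫| := by
          have := abs_sub (⟪a, x⟫ + b) (⟪a, x⟫)
          simpa using this
        linarith
      rw [this]; simp

/-- Graph neighbourhood. -/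
def graphNhd (R δ : ℝ) (p : V × ℝ) : Set (V × ℝ) :=
  {z | z.1 ∈ Metric.closedBall (0 : V) R ∧ |z.2 - (⟪p.1, z.1⟫ + p.2)| ≤ δ}

lemma measurableSet_graphNhd (R δ : ℝ) (p : V × ℝ) : MeasurableSet (graphNhd R δ p) := by
  refine IsClosed.measurableSet ?_
  refine IsClosed.inter (Metric.isClosed_closedBall.preimage continuous_fst) ?_
  exact isClosed_le (f := fun z : V × ℝ => |z.2 - (⟪p.1, z.1⟫ + p.2)|) (g := fun _ => δ)
    (by fun_prop) (by fun_prop)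

lemma vol_graphNhd_inter_ge (R δ : ℝ) (p : V × ℝ) (D D' : Set (V × ℝ))
    (hD : MeasurableSet D) (hD' : MeasurableSet D')
    (hDD : ∀ x y y', (x, y) ∈ D → |y' - y| ≤ δ → (x, y') ∈ D') :
    ENNReal.ofReal (2 * δ) *
      volume {x : V | x ∈ Metric.closedBall (0 : V) R ∧ (x, ⟪p.1, x⟫ + p.2) ∈ D} ≤
      volume (D' ∩ graphNhd R δ p) := by
  set G := {x : V | x ∈ Metric.closedBall (0 : V) R ∧ (x, ⟪p.1, x⟫ + p.2) ∈ D}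
  have hG : MeasurableSet G := by
    refine MeasurableSet.inter Metric.isClosed_closedBall.measurableSet ?_
    exact hD.preimage (f := fun x : V => (x, ⟪p.1, x⟫ + p.2)) (by fun_prop)
  rw [Measure.volume_eq_prod, Measure.prod_apply (hD'.inter (measurableSet_graphNhd R δ p)),
    ← lintegral_indicator_const hG]
  refine lintegral_mono fun x => ?_
  by_cases hx : x ∈ G
  · rw [indicator_of_mem hx]
    have : Icc (⟪p.1, x⟫ + p.2 - δ) (⟪p.1, x⟫ + p.2 + δ) ⊆
        Prod.mk x ⁻¹' (D' ∩ graphNhd R δ p) := by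
      intro y hy
      have h1 : |y - (⟪p.1, x⟫ + p.2)| ≤ δ := abs_le.2 ⟨by linarith [hy.1], by linarith [hy.2]⟩
      exact ⟨hDD _ _ _ hx.2 h1, hx.1, h1⟩
    refine le_trans (le_of_eq ?_) (measure_mono this)
    rw [Real.volume_Icc]; congr 1; ring
  · rw [indicator_of_notMem hx]; exact zero_le

lemma vol_graphNhd_inter_le (R δ : ℝ) (p q : V × ℝ) :
    volume (graphNhd R δ p ∩ graphNhd R δ q) ≤
      ENNReal.ofReal (2 * δ) * volume (slab R (p.1 - q.1) (p.2 - q.2) δ) := by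
  rw [Measure.volume_eq_prod, Measure.prod_apply
    ((measurableSet_graphNhd R δ p).inter (measurableSet_graphNhd R δ q)),
    ← lintegral_indicator_const (measurableSet_slab _ _ _ _)]
  refine lintegral_mono fun x => ?_
  by_cases hx : x ∈ slab R (p.1 - q.1) (p.2 - q.2) δ
  · rw [indicator_of_mem hx]
    have : Prod.mk x ⁻¹' (graphNhd R δ p ∩ graphNhd R δ q) ⊆
        Icc (⟪p.1, x⟫ + p.2 - δ) (⟪p.1, x⟫ + p.2 + δ) := by
      intro y hy
      have h1 := abs_le.1 hy.1.2
      exact ⟨by linarith [h1.1], by linarith [h1.2]⟩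
    refine (measure_mono this).trans (le_of_eq ?_)
    rw [Real.volume_Icc]; congr 1; ring
  · rw [indicator_of_notMem hx]
    have : Prod.mk x ⁻¹' (graphNhd R δ p ∩ graphNhd R δ q) = ∅ := by
      ext y
      simp only [mem_empty_iff_false, iff_false]
      intro hy
      apply hx
      have h1 := abs_le.1 hy.1.2
      have h2 := abs_le.1 hy.2.2
      refine ⟨hy.1.1, abs_le.2 ?_⟩
      simp only [inner_sub_left] at h1 h2 ⊢
      constructor <;> linarith [h1.1, h1.2, h2.1, h2.2]
    rw [this]; simp

open Classical in
lemma slab_dyadic {R C : ℝ} (hC : 0 ≤ C)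
    (hC1 : ∀ (a : V) (b δ : ℝ), volume (slab R a b δ) ≤ ENNReal.ofReal C)
    (hC2 : ∀ (a : V) (b δ ρ : ℝ), 0 < δ → 0 < ρ → ρ ≤ max ‖a‖ |b| →
      volume (slab R a b δ) ≤ ENNReal.ofReal (C * δ / ρ)) (m : ℕ) (p q : V × ℝ)
    (hpq : dist p q ≤ 1) :
    volume (slab R (p.1 - q.1) (p.2 - q.2) ((1 / 2) ^ m)) ≤ ∑ i ∈ Finset.range (m + 1),
      if dist p q ≤ (1 / 2 : ℝ) ^ i then ENNReal.ofReal (C * (1 / 2) ^ m * 2 ^ (i + 1)) else 0 := by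
  have hd : max ‖p.1 - q.1‖ |p.2 - q.2| = dist p q := by
    rw [Prod.dist_eq, dist_eq_norm, Real.dist_eq]
  have key : ∃ i ∈ Finset.range (m + 1), dist p q ≤ (1 / 2 : ℝ) ^ i ∧
      volume (slab R (p.1 - q.1) (p.2 - q.2) ((1 / 2) ^ m)) ≤
        ENNReal.ofReal (C * (1 / 2) ^ m * 2 ^ (i + 1)) := by
    by_cases h : dist p q ≤ (1 / 2 : ℝ) ^ m
    · refine ⟨m, by simp, h, (hC1 _ _ _).trans (ENNReal.ofReal_le_ofReal ?_)⟩
      have : (1 / 2 : ℝ) ^ m * 2 ^ (m + 1) = 2 := by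
        rw [pow_succ, ← mul_assoc, ← mul_pow]; norm_num
      rw [mul_assoc, this]; linarith
    · have hex : ∃ i, ¬ dist p q ≤ (1 / 2 : ℝ) ^ i := ⟨m, h⟩
      have hspec := Nat.find_spec hex
      have hmin := fun j => Nat.find_min (m := j) hex
      have hle := Nat.find_min' hex h
      obtain ⟨k, hk⟩ : ∃ k, Nat.find hex = k + 1 := by
        refine Nat.exists_eq_succ_of_ne_zero fun h0 => ?_
        rw [h0] at hspec; simp at hspec; linarith
      rw [hk] at hspec hmin hle
      refine ⟨k, by simp; omega, not_not.1 (hmin k (by omega)), ?_⟩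
      push Not at hspec
      refine (hC2 _ _ _ ((1 / 2) ^ (k + 1)) (by positivity) (by positivity) ?_).trans
        (ENNReal.ofReal_le_ofReal (le_of_eq ?_))
      · rw [hd]; exact hspec.le
      · rw [div_eq_mul_inv, ← inv_pow]; norm_num
  obtain ⟨i, hi, h1, h2⟩ := key
  refine h2.trans ?_
  refine le_trans (le_of_eq ?_) (Finset.single_le_sum (f := fun i => if dist p q ≤ (1 / 2 : ℝ) ^ i
    then ENNReal.ofReal (C * (1 / 2) ^ m * 2 ^ (i + 1)) else 0) (fun _ _ => zero_le) hi)
  simp only [if_pos h1]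

lemma geom_bound (s : ℝ) (hs : 1 < s) : ∃ K : ℝ, 0 ≤ K ∧ ∀ m : ℕ,
    ∑ i ∈ Finset.range m, (2 : ℝ) ^ (i + 1) * ((1 / 2 : ℝ) ^ i) ^ s ≤ K := by
  have hr : (2 : ℝ) * (1 / 2) ^ s < 1 := by
    have : (1 / 2 : ℝ) ^ s < (1 / 2 : ℝ) ^ (1 : ℝ) :=
      Real.rpow_lt_rpow_of_exponent_gt (by norm_num) (by norm_num) hs
    rw [Real.rpow_one] at this
    linarith
  have hr0 : (0 : ℝ) ≤ 2 * (1 / 2) ^ s := by positivity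
  have hsum := summable_geometric_of_lt_one hr0 hr
  refine ⟨2 * ∑' i : ℕ, ((2 : ℝ) * (1 / 2) ^ s) ^ i,
    mul_nonneg (by norm_num) (tsum_nonneg fun i => by positivity), fun m => ?_⟩
  have : ∀ i : ℕ, (2 : ℝ) ^ (i + 1) * ((1 / 2 : ℝ) ^ i) ^ s = 2 * ((2 : ℝ) * (1 / 2) ^ s) ^ i := by
    intro i
    rw [mul_pow, ← Real.rpow_natCast ((1 / 2 : ℝ) ^ s), ← Real.rpow_natCast (1 / 2 : ℝ),
      ← Real.rpow_mul (by norm_num), ← Real.rpow_mul (by norm_num), mul_comm s]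
    ring
  simp only [this, ← Finset.mul_sum]
  gcongr
  exact hsum.sum_le_tsum _ (fun i _ => by positivity)

lemma cs_sets {X : Type*} [MeasurableSpace X] (μ : Measure X) (T : Finset X)
    (w : X → ENNReal) (Z : X → Set X) (hZ : ∀ p, MeasurableSet (Z p)) (D : Set X)
    (hD : MeasurableSet D) :
    (∑ p ∈ T, w p * μ (D ∩ Z p)) ^ 2 ≤
      μ D * ∑ q ∈ T, w q * ∑ p ∈ T, w p * μ (Z p ∩ Z q) := by
  set h : X → ENNReal := fun x => ∑ p ∈ T, w p * (Z p).indicator 1 x with hh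
  have hmeas1 : ∀ p, Measurable (fun x => w p * (Z p).indicator (1 : X → ENNReal) x) := fun p =>
    (measurable_one.indicator (hZ p)).const_mul _
  have hmeas : Measurable h := Finset.measurable_fun_sum _ fun p _ => hmeas1 p
  have h1 : ∑ p ∈ T, w p * μ (D ∩ Z p) = ∫⁻ x in D, h x ∂μ := by
    rw [hh, lintegral_finsetSum _ (fun p _ => hmeas1 p)]
    refine Finset.sum_congr rfl fun p _ => ?_
    rw [lintegral_const_mul _ (measurable_one.indicator (hZ p)), lintegral_indicator_one (hZ p),
      Measure.restrict_apply (hZ p), inter_comm]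
  have h2 : ∫⁻ x, h x ^ 2 ∂μ = ∑ q ∈ T, w q * ∑ p ∈ T, w p * μ (Z p ∩ Z q) := by
    have : ∀ x, h x ^ 2 = ∑ q ∈ T, w q * ∑ p ∈ T, w p * (Z p ∩ Z q).indicator 1 x := by
      intro x
      rw [hh, sq]
      simp only
      rw [Finset.sum_mul]
      refine Finset.sum_congr rfl fun q _ => ?_
      rw [mul_assoc, Finset.mul_sum]
      congr 1
      refine Finset.sum_congr rfl fun p _ => ?_
      rw [inter_indicator_one]
      simp only [Pi.mul_apply]
      ring
    simp only [this]
    have hm : ∀ p q, Measurable ((Z p ∩ Z q).indicator (1 : X → ENNReal)) := fun p q =>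
      measurable_one.indicator ((hZ p).inter (hZ q))
    rw [lintegral_finsetSum _ (fun q _ => (Finset.measurable_fun_sum _
      fun p _ => (hm p q).const_mul _).const_mul _)]
    refine Finset.sum_congr rfl fun q _ => ?_
    rw [lintegral_const_mul _ (Finset.measurable_fun_sum _ fun p _ => (hm p q).const_mul _),
      lintegral_finsetSum _ (fun p _ => (hm p q).const_mul _)]
    congr 1
    refine Finset.sum_congr rfl fun p _ => ?_
    rw [lintegral_const_mul _ (hm p q), lintegral_indicator_one ((hZ p).inter (hZ q))]
  rw [h1, ← h2]
  have h3 := ENNReal.lintegral_mul_le_Lp_mul_Lq (μ.restrict D) Real.HolderConjugate.two_two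
    (f := fun _ => 1) (g := h) aemeasurable_const hmeas.aemeasurable
  have h4 : ∫⁻ x in D, h x ∂μ ≤ (μ D) ^ (1 / 2 : ℝ) * (∫⁻ x, h x ^ 2 ∂μ) ^ (1 / 2 : ℝ) := by
    refine le_trans (le_of_eq ?_) (h3.trans ?_)
    · simp
    · simp only [lintegral_const, Measure.restrict_apply_univ, ENNReal.rpow_ofNat]
      simp only [one_pow, one_mul]
      gcongr
      exact Measure.restrict_le_self
  calc (∫⁻ x in D, h x ∂μ) ^ 2
      ≤ ((μ D) ^ (1 / 2 : ℝ) * (∫⁻ x, h x ^ 2 ∂μ) ^ (1 / 2 : ℝ)) ^ 2 := by gcongr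
    _ = _ := by
      rw [mul_pow, ← ENNReal.rpow_natCast, ← ENNReal.rpow_natCast, ← ENNReal.rpow_mul,
        ← ENNReal.rpow_mul]
      norm_num

open Classical in
lemma hcontent_le (s : ℝ) (hs0 : 0 < s) (hs : 1 < s) (R : ℝ) (hR : 1 ≤ R) :
    ∃ C : ENNReal, C ≠ ⊤ ∧ ∀ S : Set (V × ℝ), (∀ p ∈ S, ∀ q ∈ S, dist p q ≤ 1) →
    ∀ D D' : Set (V × ℝ), MeasurableSet D → MeasurableSet D' →
    ∀ δ : ℝ, 0 < δ → (∀ x y y', (x, y) ∈ D → |y' - y| ≤ δ → (x, y') ∈ D') →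
    ∀ τ : ENNReal, (∀ p ∈ S, τ ≤
      volume {x : V | x ∈ Metric.closedBall (0 : V) R ∧ (x, ⟪p.1, x⟫ + p.2) ∈ D}) →
    hcontent s hs0 S * τ ^ 2 ≤ C * volume D' := by
  obtain ⟨C, hC0, hC1, hC2⟩ := slab_le (V := V) R hR
  obtain ⟨K, hK0, hK⟩ := geom_bound s hs
  refine ⟨ENNReal.ofReal (12 ^ s) * ENNReal.ofReal (C * K / 2),
    ENNReal.mul_ne_top ENNReal.ofReal_ne_top ENNReal.ofReal_ne_top, ?_⟩
  intro S hS D D' hD hD' δ₀ hδ₀ hDD τ hτ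
  obtain ⟨m, hm⟩ := exists_pow_lt_of_lt_one hδ₀ (show (1 / 2 : ℝ) < 1 by norm_num)
  set δ : ℝ := (1 / 2) ^ m with hδ
  have hδ0 : 0 < δ := by positivity
  have hbdd : Bornology.IsBounded S := Metric.isBounded_iff.2 ⟨1, fun p hp q hq => hS p hp q hq⟩
  have : ProperSpace V := FiniteDimensional.proper_real V
  obtain ⟨T, hTS, hTfin, hST⟩ := Metric.finite_approx_of_totallyBounded
    (hbdd.isCompact_closure.totallyBounded.subset subset_closure) δ hδ0
  lift T to Finset (V × ℝ) using hTfin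
  obtain ⟨w, w0, wf, wc⟩ := frostman s hs0 S m T (hST.trans (by
    refine iUnion₂_mono' fun p hp => ⟨p, hp, Metric.ball_subset_closedBall⟩))
  set ω : V × ℝ → ENNReal := fun p => ENNReal.ofReal (w p) with hω
  set W : ENNReal := ∑ p ∈ T, ω p with hW
  have hWt : W ≠ ⊤ := by
    rw [hW]; exact (ENNReal.sum_lt_top.2 fun p _ => ENNReal.ofReal_lt_top).ne
  have hcW : hcontent s hs0 S ≤ ENNReal.ofReal (12 ^ s) * W := by
    refine wc.trans (le_of_eq ?_)
    rw [ENNReal.ofReal_mul (by positivity), ENNReal.ofReal_sum_of_nonneg (fun p _ => w0 p)]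
  set e : ENNReal := ENNReal.ofReal (2 * δ) with he
  have he0 : e ≠ 0 := by rw [he]; simpa using hδ0
  have het : e ≠ ⊤ := ENNReal.ofReal_ne_top
  -- energy
  have hen : ∀ q ∈ T, ∑ p ∈ T, ω p * volume (slab R (p.1 - q.1) (p.2 - q.2) δ) ≤
      ENNReal.ofReal (C * δ * K) := by
    intro q hq
    calc ∑ p ∈ T, ω p * volume (slab R (p.1 - q.1) (p.2 - q.2) δ)
        ≤ ∑ p ∈ T, ω p * ∑ i ∈ Finset.range (m + 1), (if dist p q ≤ (1 / 2 : ℝ) ^ i then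
            ENNReal.ofReal (C * (1 / 2) ^ m * 2 ^ (i + 1)) else 0) := by
          refine Finset.sum_le_sum fun p hp => ?_
          gcongr
          exact slab_dyadic hC0 hC1 hC2 m p q (hS p (hTS hp) q (hTS hq))
      _ = ∑ i ∈ Finset.range (m + 1), ENNReal.ofReal (C * δ * 2 ^ (i + 1)) *
            ∑ p ∈ T with dist p q ≤ (1 / 2 : ℝ) ^ i, ω p := by
          simp only [Finset.mul_sum]
          rw [Finset.sum_comm]
          refine Finset.sum_congr rfl fun i _ => ?_
          rw [Finset.sum_filter]
          refine Finset.sum_congr rfl fun p _ => ?_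
          split_ifs
          · rw [mul_comm]
          · simp
      _ ≤ ∑ i ∈ Finset.range (m + 1), ENNReal.ofReal (C * δ * 2 ^ (i + 1)) *
            ENNReal.ofReal (((1 / 2 : ℝ) ^ i) ^ s) := by
          refine Finset.sum_le_sum fun i hi => ?_
          gcongr
          rw [hω, ← ENNReal.ofReal_sum_of_nonneg (fun p _ => w0 p)]
          exact ENNReal.ofReal_le_ofReal (wf q hq i (by simp at hi; omega))
      _ = ENNReal.ofReal (C * δ * ∑ i ∈ Finset.range (m + 1),
            (2 : ℝ) ^ (i + 1) * ((1 / 2 : ℝ) ^ i) ^ s) := by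
          rw [Finset.mul_sum, ENNReal.ofReal_sum_of_nonneg (fun i _ => by positivity)]
          refine Finset.sum_congr rfl fun i _ => ?_
          rw [← ENNReal.ofReal_mul (by positivity)]
          congr 1; ring
      _ ≤ _ := by
          refine ENNReal.ofReal_le_ofReal ?_
          exact mul_le_mul_of_nonneg_left (hK _) (by positivity)
  have hcs := cs_sets (volume : Measure (V × ℝ)) T ω (graphNhd R δ)
    (measurableSet_graphNhd R δ) D' hD'
  have hlow : e * τ * W ≤ ∑ p ∈ T, ω p * volume (D' ∩ graphNhd R δ p) := by
    rw [hW, Finset.mul_sum]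
    refine Finset.sum_le_sum fun p hp => ?_
    rw [mul_comm]
    gcongr
    refine le_trans ?_ (vol_graphNhd_inter_ge R δ p D D' hD hD'
      (fun x y y' h h' => hDD x y y' h (h'.trans hm.le)))
    gcongr
    exact hτ p (hTS hp)
  have hup : ∑ q ∈ T, ω q * ∑ p ∈ T, ω p * volume (graphNhd R δ p ∩ graphNhd R δ q) ≤
      W * (e * (e * ENNReal.ofReal (C * K / 2))) := by
    rw [hW, Finset.sum_mul]
    refine Finset.sum_le_sum fun q hq => ?_
    gcongr
    have h1 : e * ENNReal.ofReal (C * K / 2) = ENNReal.ofReal (C * δ * K) := by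
      rw [he, ← ENNReal.ofReal_mul (by positivity)]; congr 1; ring
    rw [h1]
    calc ∑ p ∈ T, ω p * volume (graphNhd R δ p ∩ graphNhd R δ q)
        ≤ ∑ p ∈ T, ω p * (e * volume (slab R (p.1 - q.1) (p.2 - q.2) δ)) := by
          refine Finset.sum_le_sum fun p _ => ?_
          gcongr
          exact vol_graphNhd_inter_le R δ p q
      _ = e * ∑ p ∈ T, ω p * volume (slab R (p.1 - q.1) (p.2 - q.2) δ) := by
          rw [Finset.mul_sum]
          refine Finset.sum_congr rfl fun p _ => ?_
          ring
      _ ≤ _ := by gcongr; exact hen q hq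
  have hfin : W * τ ^ 2 ≤ ENNReal.ofReal (C * K / 2) * volume D' := by
    by_cases hW0 : W = 0
    · rw [hW0]; simp
    have h1 : (e * e * W) * (W * τ ^ 2) ≤
        (e * e * W) * (ENNReal.ofReal (C * K / 2) * volume D') := by
      calc (e * e * W) * (W * τ ^ 2) = (e * τ * W) ^ 2 := by ring
        _ ≤ _ := by gcongr
        _ ≤ _ := hcs
        _ ≤ volume D' * (W * (e * (e * ENNReal.ofReal (C * K / 2)))) := by gcongr
        _ = _ := by ring
    exact (ENNReal.mul_le_mul_iff_right (mul_ne_zero (mul_ne_zero he0 he0) hW0)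
      (ENNReal.mul_ne_top (ENNReal.mul_ne_top het het) hWt)).1 h1
  calc hcontent s hs0 S * τ ^ 2 ≤ ENNReal.ofReal (12 ^ s) * W * τ ^ 2 := by gcongr
    _ = ENNReal.ofReal (12 ^ s) * (W * τ ^ 2) := by ring
    _ ≤ ENNReal.ofReal (12 ^ s) * (ENNReal.ofReal (C * K / 2) * volume D') := by gcongr
    _ = _ := by ring

lemma exists_thin {X : Type*} [MetricSpace X] [MeasurableSpace X] [BorelSpace X] (μ : Measure X)
    (U : Set X) (hU : IsOpen U) (hfin : μ U ≠ ⊤) (ε r : ENNReal) (hε : ε ≠ 0) (hr : r ≠ 0) :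
    ∃ t : ENNReal, t ≠ 0 ∧ t ≤ r ∧ μ {z | z ∈ U ∧ Metric.infEDist z Uᶜ ≤ t} ≤ ε := by
  have hanti : Antitone (fun k : ℕ => {z | z ∈ U ∧ Metric.infEDist z Uᶜ ≤ ((k : ENNReal))⁻¹}) := by
    intro k l hkl z hz
    refine ⟨hz.1, hz.2.trans ?_⟩
    gcongr
  have hmeas : ∀ k : ℕ, MeasurableSet {z | z ∈ U ∧ Metric.infEDist z Uᶜ ≤ ((k : ENNReal))⁻¹} := by
    intro k
    refine hU.measurableSet.inter (IsClosed.measurableSet ?_)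
    exact isClosed_le Metric.continuous_infEDist continuous_const
  have hlim := tendsto_measure_iInter_atTop (μ := μ) (fun k => (hmeas k).nullMeasurableSet) hanti
    ⟨0, measure_ne_top_of_subset (fun z hz => hz.1) hfin⟩
  have hemp : (⋂ k : ℕ, {z | z ∈ U ∧ Metric.infEDist z Uᶜ ≤ ((k : ENNReal))⁻¹}) = ∅ := by
    ext z
    simp only [mem_iInter, mem_ofPred_eq, mem_empty_iff_false, iff_false]
    intro h
    have hzU := (h 0).1
    have hd : Metric.infEDist z Uᶜ ≠ 0 := by
      intro h0
      have := (Metric.mem_iff_infEDist_zero_of_closed hU.isClosed_compl).2 h0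
      exact this hzU
    obtain ⟨k, hk⟩ := ENNReal.exists_inv_nat_lt hd
    exact absurd (h k).2 (not_le.2 hk)
  rw [hemp, measure_empty] at hlim
  have h1 := hlim.eventually (gt_mem_nhds (pos_iff_ne_zero.2 hε))
  have h2 := ENNReal.tendsto_inv_nat_nhds_zero.eventually (gt_mem_nhds (pos_iff_ne_zero.2 hr))
  obtain ⟨k, hk1, hk2⟩ := (h1.and h2).exists
  exact ⟨((k : ENNReal))⁻¹, by simp, hk2.le, hk1.le⟩

lemma tsum_halves : ∑' j : ℕ, (2⁻¹ : ENNReal) ^ (j + 2) = 2⁻¹ := by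
  have h : ∀ j : ℕ, (2⁻¹ : ENNReal) ^ (j + 2) = 2⁻¹ ^ j * (2⁻¹ * 2⁻¹) := fun j => by ring
  simp only [h]
  rw [ENNReal.tsum_mul_right, ENNReal.tsum_geometric, ENNReal.one_sub_inv_two, inv_inv,
    ← mul_assoc, ENNReal.mul_inv_cancel (by norm_num) (by norm_num), one_mul]

lemma hcontent_zero (s : ℝ) (hs0 : 0 < s) (hs : 1 < s) (R : ℝ) (hR : 1 ≤ R)
    (S : Set (V × ℝ)) (hS : ∀ p ∈ S, ∀ q ∈ S, dist p q ≤ 1) (N : Set (V × ℝ))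
    (hN : volume N = 0) (lam : ENNReal) (hl0 : lam ≠ 0) (hlt : lam ≠ ⊤)
    (hlam : ∀ p ∈ S, lam ≤
      volume {x : V | x ∈ Metric.closedBall (0 : V) R ∧ (x, ⟪p.1, x⟫ + p.2) ∈ N}) :
    hcontent s hs0 S = 0 := by
  obtain ⟨C, hCt, hC⟩ := hcontent_le (V := V) s hs0 hs R hR
  set a : ℕ → ENNReal := fun j => 2⁻¹ ^ (j + 2) with ha
  have ha0 : ∀ j, a j ≠ 0 := fun j => pow_ne_zero _ (by simp)
  have hat : ∀ j, a j ≠ ⊤ := fun j => ENNReal.pow_ne_top (by simp)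
  have hasum : ∑' j, a j = 2⁻¹ := tsum_halves
  have main : ∀ η : ENNReal, η ≠ 0 → η ≠ ⊤ → hcontent s hs0 S * lam ^ 2 ≤ C * η := by
    intro η hη0 hηt
    have hb0 : ∀ j, η * a j * a j ^ 2 ≠ 0 := fun j =>
      mul_ne_zero (mul_ne_zero hη0 (ha0 j)) (pow_ne_zero _ (ha0 j))
    obtain ⟨U, hNU, hUo, hUv⟩ := Set.exists_isOpen_lt_add (μ := (volume : Measure (V × ℝ))) N
      (by rw [hN]; simp) (hb0 0)
    rw [hN, zero_add] at hUv
    have hUt : volume U ≠ ⊤ := (hUv.trans_le le_top).ne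
    have hex := fun j : ℕ => exists_thin (volume : Measure (V × ℝ)) U hUo hUt
      (η * a (j + 1) * a (j + 1) ^ 2) ((j : ENNReal)⁻¹) (hb0 _) (by simp)
    choose t ht0 htr htv using hex
    set tt : ℕ → ENNReal := fun j => Nat.casesOn j ⊤ t with htt
    have htt0 : ∀ j, tt j ≠ 0 := by
      intro j; cases j with
      | zero => simp [htt]
      | succ j => exact ht0 j
    have httv : ∀ j, volume {z | z ∈ U ∧ Metric.infEDist z Uᶜ ≤ tt j} ≤ η * a j * a j ^ 2 := by
      intro j; cases j with
      | zero => exact (measure_mono fun z hz => hz.1).trans hUv.le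
      | succ j => exact htv j
    set D : ℕ → Set (V × ℝ) := fun j =>
      {z | tt (j + 1) / 2 < Metric.infEDist z Uᶜ ∧ Metric.infEDist z Uᶜ ≤ tt j / 2} with hDdef
    have hDm : ∀ j, MeasurableSet (D j) := fun j =>
      (isOpen_lt continuous_const Metric.continuous_infEDist).measurableSet.inter
        (isClosed_le Metric.continuous_infEDist continuous_const).measurableSet
    have hD'm : ∀ j, MeasurableSet {z | z ∈ U ∧ Metric.infEDist z Uᶜ ≤ tt j} := fun j =>
      hUo.measurableSet.inter
        (isClosed_le Metric.continuous_infEDist continuous_const).measurableSet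
    have hUD : U ⊆ ⋃ j, D j := by
      intro z hz
      have hd : Metric.infEDist z Uᶜ ≠ 0 := by
        intro h0
        have := (Metric.mem_iff_infEDist_zero_of_closed hUo.isClosed_compl).2 h0
        exact this hz
      have hexj : ∃ j, tt j / 2 < Metric.infEDist z Uᶜ := by
        obtain ⟨k, hk⟩ := ENNReal.exists_inv_nat_lt hd
        exact ⟨k + 1, (ENNReal.half_le_self.trans (htr k)).trans_lt hk⟩
      classical
      have hspec := Nat.find_spec hexj
      have hmin := fun j => Nat.find_min (m := j) hexj
      obtain ⟨k, hk⟩ : ∃ k, Nat.find hexj = k + 1 := by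
        refine Nat.exists_eq_succ_of_ne_zero fun h0 => ?_
        rw [h0] at hspec
        simp [htt, ENNReal.top_div] at hspec
      rw [hk] at hspec hmin
      exact mem_iUnion.2 ⟨k, hspec, not_lt.1 (hmin k (by omega))⟩
    set Sj : ℕ → Set (V × ℝ) := fun j => {p | p ∈ S ∧ lam * a j ≤
      volume {x : V | x ∈ Metric.closedBall (0 : V) R ∧ (x, ⟪p.1, x⟫ + p.2) ∈ D j}} with hSj
    have hScov : S ⊆ ⋃ j, Sj j := by
      intro p hp
      by_contra hcon
      simp only [mem_iUnion, hSj, mem_ofPred_eq, not_exists, not_and, not_le] at hcon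
      have h1 : lam ≤ lam * 2⁻¹ := by
        calc lam ≤ volume {x : V | x ∈ Metric.closedBall (0 : V) R ∧ (x, ⟪p.1, x⟫ + p.2) ∈ N} :=
              hlam p hp
          _ ≤ volume (⋃ j, {x : V | x ∈ Metric.closedBall (0 : V) R ∧
                (x, ⟪p.1, x⟫ + p.2) ∈ D j}) := by
              refine measure_mono fun x hx => ?_
              obtain ⟨j, hj⟩ := mem_iUnion.1 (hUD (hNU hx.2))
              exact mem_iUnion.2 ⟨j, hx.1, hj⟩
          _ ≤ ∑' j, volume {x : V | x ∈ Metric.closedBall (0 : V) R ∧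
                (x, ⟪p.1, x⟫ + p.2) ∈ D j} := measure_iUnion_le _
          _ ≤ ∑' j, lam * a j := ENNReal.tsum_le_tsum fun j => (hcon j hp).le
          _ = lam * 2⁻¹ := by rw [ENNReal.tsum_mul_left, hasum]
      rw [← div_eq_mul_inv] at h1
      exact absurd h1 (not_le.2 (ENNReal.half_lt_self hl0 hlt))
    have hSjc : ∀ j, hcontent s hs0 (Sj j) * lam ^ 2 ≤ C * η * a j := by
      intro j
      obtain ⟨δ, hδ0, hδ1⟩ : ∃ δ : ℝ, 0 < δ ∧
          ENNReal.ofReal δ ≤ min (tt (j + 1) / 2) (tt j / 2) := by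
        have hpos : 0 < min (tt (j + 1) / 2) (tt j / 2) :=
          lt_min (ENNReal.half_pos (htt0 (j + 1))) (ENNReal.half_pos (htt0 j))
        obtain ⟨r, hr0, hr1⟩ := ENNReal.lt_iff_exists_nnreal_btwn.1 hpos
        refine ⟨r, by exact_mod_cast hr0, ?_⟩
        rw [ENNReal.ofReal_coe_nnreal]; exact hr1.le
      have h1 := hC (Sj j) (fun p hp q hq => hS p hp.1 q hq.1) (D j) _ (hDm j) (hD'm j) δ hδ0 ?_
        (lam * a j) (fun p hp => hp.2)
      · have h2 : hcontent s hs0 (Sj j) * lam ^ 2 * a j ^ 2 ≤ C * η * a j * a j ^ 2 := by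
          calc hcontent s hs0 (Sj j) * lam ^ 2 * a j ^ 2
              = hcontent s hs0 (Sj j) * (lam * a j) ^ 2 := by ring
            _ ≤ _ := h1
            _ ≤ C * (η * a j * a j ^ 2) := by gcongr; exact httv j
            _ = _ := by ring
        exact (ENNReal.mul_le_mul_iff_left (pow_ne_zero _ (ha0 j))
          (ENNReal.pow_ne_top (hat j))).1 h2
      · intro x y y' hxy hy
        have hed : edist (x, y) (x, y') ≤ ENNReal.ofReal δ := by
          rw [edist_dist]
          refine ENNReal.ofReal_le_ofReal ?_
          rw [Prod.dist_eq, dist_self, dist_comm, Real.dist_eq]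
          exact max_le hδ0.le hy
        have hδa := hδ1.trans (min_le_left _ _)
        have hδb := hδ1.trans (min_le_right _ _)
        constructor
        · by_contra hnot
          have h0 : Metric.infEDist (x, y') Uᶜ = 0 := Metric.infEDist_zero_of_mem hnot
          have h3 := Metric.infEDist_le_infEDist_add_edist (x := (x, y)) (y := (x, y')) (s := Uᶜ)
          rw [h0, zero_add] at h3
          exact absurd (h3.trans (hed.trans hδa)) (not_le.2 hxy.1)
        · have h3 := Metric.infEDist_le_infEDist_add_edist (x := (x, y')) (y := (x, y)) (s := Uᶜ)
          rw [edist_comm] at h3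
          calc _ ≤ _ := h3
            _ ≤ tt j / 2 + tt j / 2 := add_le_add hxy.2 (hed.trans hδb)
            _ = tt j := ENNReal.add_halves _
    calc hcontent s hs0 S * lam ^ 2 ≤ (∑' j, hcontent s hs0 (Sj j)) * lam ^ 2 := by
          gcongr
          exact (measure_mono hScov).trans (measure_iUnion_le _)
      _ = ∑' j, hcontent s hs0 (Sj j) * lam ^ 2 := ENNReal.tsum_mul_right.symm
      _ ≤ ∑' j, C * η * a j := ENNReal.tsum_le_tsum hSjc
      _ = C * η * 2⁻¹ := by rw [ENNReal.tsum_mul_left, hasum]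
      _ ≤ C * η * 1 := by gcongr; simp
      _ = C * η := mul_one _
  have hz : hcontent s hs0 S * lam ^ 2 ≤ 0 := by
    have hlim : Filter.Tendsto (fun k : ℕ => C * ((k : ENNReal) + 1)⁻¹) Filter.atTop (nhds 0) := by
      have h1 := (Filter.tendsto_add_atTop_iff_nat 1).2 ENNReal.tendsto_inv_nat_nhds_zero
      have h2 := ENNReal.Tendsto.const_mul h1 (Or.inr hCt)
      simpa using h2
    refine ge_of_tendsto' hlim fun k => main _ ?_ ?_
    · simp
    · simp
  have := le_antisymm hz (zero_le)
  rcases mul_eq_zero.1 this with h | h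
  · exact h
  · exact absurd h (pow_ne_zero _ hl0)

end slabs

lemma volume_pos_of_hausdorff (d : ℕ) (p : EuclideanSpace ℝ (Fin d) × ℝ)
    (A : Set (EuclideanSpace ℝ (Fin d) × ℝ))
    (h : 0 < μH[(d : ℝ)] ({q : EuclideanSpace ℝ (Fin d) × ℝ | q.2 = ⟪p.1, q.1⟫ + p.2} ∩ A)) :
    volume {x : EuclideanSpace ℝ (Fin d) | (x, ⟪p.1, x⟫ + p.2) ∈ A} ≠ 0 := by
  intro h0
  have hac : (μH[(d : ℝ)] : Measure (EuclideanSpace ℝ (Fin d))) ≪ volume := by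
    have : (μH[(d : ℝ)] : Measure (EuclideanSpace ℝ (Fin d))).IsAddHaarMeasure := by
      simpa using isAddHaarMeasure_hausdorffMeasure (E := EuclideanSpace ℝ (Fin d))
    exact Measure.absolutelyContinuous_isAddHaarMeasure _ _
  have h1 := hac h0
  have hlip : LipschitzWith (max 1 ‖p.1‖₊)
      (fun x : EuclideanSpace ℝ (Fin d) => (x, ⟪p.1, x⟫ + p.2)) := by
    refine LipschitzWith.prodMk LipschitzWith.id ?_
    refine LipschitzWith.of_dist_le_mul fun x y => ?_
    rw [Real.dist_eq, dist_eq_norm, add_sub_add_right_eq_sub, ← inner_sub_right]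
    exact abs_real_inner_le_norm _ _
  have h2 := hlip.hausdorffMeasure_image_le (d := (d : ℝ)) (by positivity)
    {x : EuclideanSpace ℝ (Fin d) | (x, ⟪p.1, x⟫ + p.2) ∈ A}
  rw [h1, mul_zero] at h2
  refine absurd h (not_lt.2 (le_trans (measure_mono ?_) h2))
  rintro ⟨x, y⟩ ⟨hy, hA⟩
  simp only [mem_ofPred_eq] at hy
  subst hy
  exact ⟨x, hA, rfl⟩

lemma main_aux (d : ℕ) (E : Set (EuclideanSpace ℝ (Fin d) × ℝ)) (hdim : 1 < dimH E)
    (N : Set (EuclideanSpace ℝ (Fin d) × ℝ))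
    (hpos : ∀ p ∈ E, volume {x : EuclideanSpace ℝ (Fin d) | (x, ⟪p.1, x⟫ + p.2) ∈ N} ≠ 0) :
    volume N ≠ 0 := by
  intro hN
  obtain ⟨s, hs1, hs2⟩ := ENNReal.lt_iff_exists_nnreal_btwn.1 hdim
  have hs : (1 : ℝ) < s := by exact_mod_cast hs1
  have hs0 : (0 : ℝ) < s := by linarith
  have htop := hausdorffMeasure_of_lt_dimH hs2
  set F : ℕ × ℕ → Set (EuclideanSpace ℝ (Fin d) × ℝ) := fun i =>
    {p | p ∈ Metric.ball (TopologicalSpace.denseSeq (EuclideanSpace ℝ (Fin d) × ℝ) i.1) (1 / 2) ∧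
      ((i.2 : ENNReal) + 1)⁻¹ ≤ volume {x : EuclideanSpace ℝ (Fin d) |
        x ∈ Metric.closedBall (0 : EuclideanSpace ℝ (Fin d)) ((i.2 : ℝ) + 1) ∧
          (x, ⟪p.1, x⟫ + p.2) ∈ N}} with hF
  have hcov : E ⊆ ⋃ i, F i := by
    intro p hp
    obtain ⟨k₀, hk₀⟩ : ∃ k : ℕ, volume {x : EuclideanSpace ℝ (Fin d) |
        x ∈ Metric.closedBall (0 : EuclideanSpace ℝ (Fin d)) ((k : ℝ) + 1) ∧
          (x, ⟪p.1, x⟫ + p.2) ∈ N} ≠ 0 := by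
      by_contra hcon
      push Not at hcon
      refine hpos p hp (measure_mono_null ?_ (measure_iUnion_null hcon))
      intro x hx
      obtain ⟨k, hk⟩ := exists_nat_ge ‖x‖
      refine mem_iUnion.2 ⟨k, ?_, hx⟩
      rw [mem_closedBall_zero_iff]; linarith
    obtain ⟨k₁, hk₁⟩ := ENNReal.exists_inv_nat_lt hk₀
    obtain ⟨i, hi⟩ := (TopologicalSpace.denseRange_denseSeq
      (EuclideanSpace ℝ (Fin d) × ℝ)).exists_dist_lt p (show (0 : ℝ) < 1 / 2 by norm_num)
    refine mem_iUnion.2 ⟨(i, max k₀ k₁), Metric.mem_ball.2 hi, ?_⟩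
    refine le_trans ?_ (hk₁.le.trans (measure_mono ?_))
    · refine ENNReal.inv_le_inv.2 ?_
      have : (k₁ : ENNReal) ≤ ((max k₀ k₁ : ℕ) : ENNReal) := by exact_mod_cast le_max_right _ _
      exact this.trans le_self_add
    · intro x hx
      refine ⟨Metric.closedBall_subset_closedBall ?_ hx.1, hx.2⟩
      have : (k₀ : ℝ) ≤ ((max k₀ k₁ : ℕ) : ℝ) := by exact_mod_cast le_max_left _ _
      simpa using this
  have hzero : ∀ i, μH[(s : ℝ)] (F i) = 0 := by
    intro i
    refine hausdorff_zero_of_hcontent s hs0 _ ?_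
    refine hcontent_zero (s : ℝ) hs0 hs ((i.2 : ℝ) + 1) (by simp) (F i) ?_ N hN
      (((i.2 : ENNReal) + 1)⁻¹) (by simp) (by simp) (fun p hp => hp.2)
    intro p hp q hq
    have h1 := Metric.mem_ball.1 hp.1
    have h2 := Metric.mem_ball.1 hq.1
    have := dist_triangle_right p q (TopologicalSpace.denseSeq (EuclideanSpace ℝ (Fin d) × ℝ) i.1)
    linarith
  have := measure_mono_null hcov (measure_iUnion_null hzero)
  rw [this] at htop
  exact ENNReal.zero_ne_top htop

end helpers

/-- **Positive measure for unions of pieces of hyperplanes.** Let `E ⊆ ℝⁿ` be a non-empty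
Borel set with `dim_H E > 1` and `A ⊆ ℝⁿ` a Borel set intersecting each hyperplane `L(p)`,
`p ∈ E`, in a set of positive `(n−1)`-dimensional measure. Then `𝓛ⁿ(L(E) ∩ A) > 0`. -/
theorem volume_pos_hyperplaneUnion_inter (n : ℕ) (hn : 2 ≤ n)
    (E : Set (EuclideanSpace ℝ (Fin (n - 1)) × ℝ)) (hE : MeasurableSet E)
    (hEne : E.Nonempty) (hdim : 1 < dimH E)
    (A : Set (EuclideanSpace ℝ (Fin (n - 1)) × ℝ)) (hA : MeasurableSet A)
    (hpos : ∀ p ∈ E, 0 < μH[(n : ℝ) - 1] (hyperplane p ∩ A)) :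
    0 < volume (hyperplaneUnion E ∩ A) := by
  have hcast : (n : ℝ) - 1 = ((n - 1 : ℕ) : ℝ) := by
    rw [Nat.cast_sub (by omega)]; simp
  rw [hcast] at hpos
  refine pos_iff_ne_zero.2 (main_aux (n - 1) E hdim _ fun p hp => ?_)
  have h1 := volume_pos_of_hausdorff (n - 1) p A (hpos p hp)
  refine fun h0 => h1 (measure_mono_null (fun x hx => ?_) h0)
  refine ⟨Set.mem_biUnion hp ?_, hx⟩
  simp [hyperplane]
end

section
/- Let n ≥ 2 and let E ⊂ ℝⁿ = ℝ^{n−1} × ℝ be an 𝓗ˢ-measurable set with 0 < 𝓗ˢ(E) < ∞, where s = dim_H E > 0. Then there exists a set X ⊂ ℝ^{n−1} with 𝓛^{n−1}(X) = 0 such that for every u ∈ ℝ^{n−1} \ X and every 𝓗ˢ-measurable set F ⊂ E with 𝓗ˢ(F) > 0, the set π_u(F) ⊂ ℝ has Hausdorff dimension equal to min{s, 1}. -/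
open MeasureTheory RealInnerProductSpace

/-- The dual projection `π_u : ℝⁿ = ℝ^{n−1} × ℝ → ℝ`, `π_u(a,b) = a·u + b`. -/
noncomputable def dualProj {n : ℕ} (u : EuclideanSpace ℝ (Fin (n - 1)))
    (p : EuclideanSpace ℝ (Fin (n - 1)) × ℝ) : ℝ :=
  ⟪p.1, u⟫ + p.2

section Aux
open Set
open scoped ENNReal NNReal Topology

theorem aux_dim {X : Type*} [MeasurableSpace X] (μ : Measure X) [IsFiniteMeasure μ]
    (f : X → ℝ) (hf : Measurable f) (t : ℝ) (ht : 0 < t) (F : Set X) (hF : μ F ≠ 0)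
    (h : ∀ᵐ x ∂μ, ∃ M : ℕ, ∀ k : ℕ, μ {y | |f x - f y| ≤ (1/2:ℝ)^k} ≤ M * ENNReal.ofReal (((1/2:ℝ)^k)^t)) :
    ENNReal.ofReal t ≤ dimH (f '' F) := by
  classical
  set G : ℕ → Set X := fun M => {x | x ∈ F ∧ ∀ k : ℕ, μ {y | |f x - f y| ≤ (1/2:ℝ)^k} ≤ M * ENNReal.ofReal (((1/2:ℝ)^k)^t)} with hG
  obtain ⟨M, hM⟩ : ∃ M, μ (G M) ≠ 0 := by
    by_contra hcon
    push Not at hcon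
    apply hF
    have h1 : μ (⋃ M, G M) = 0 := measure_iUnion_null hcon
    refine measure_mono_null_ae ?_ h1
    filter_upwards [h] with x hx hxF
    obtain ⟨M, hM⟩ := hx
    exact mem_iUnion.2 ⟨M, hxF, hM⟩
  have hreal : ∀ x ∈ G M, ∀ r : ℝ, 0 < r → r ≤ 1 →
      μ {y | |f x - f y| ≤ r} ≤ (M * ENNReal.ofReal (2^t)) * ENNReal.ofReal (r^t) := by
    intro x hx r hr hr1
    obtain ⟨k, hk1, hk2⟩ := exists_nat_pow_near_of_lt_one hr hr1 (by norm_num : (0:ℝ) < 1/2) (by norm_num)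
    calc μ {y | |f x - f y| ≤ r} ≤ μ {y | |f x - f y| ≤ (1/2:ℝ)^k} :=
          measure_mono (fun y hy => le_trans hy hk2)
      _ ≤ M * ENNReal.ofReal (((1/2:ℝ)^k)^t) := hx.2 k
      _ ≤ M * ENNReal.ofReal ((2 * r)^t) := by
          gcongr
          rw [pow_succ] at hk1; linarith
      _ = _ := by
          rw [Real.mul_rpow (by norm_num) hr.le, ENNReal.ofReal_mul (by positivity), mul_assoc]
  set c : ℝ≥0∞ := M * ENNReal.ofReal (2^t) + 1 with hc
  have hc0 : c ≠ 0 := by simp [hc]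
  have hct : c ≠ ⊤ := by
    simp only [hc]
    exact ENNReal.add_ne_top.2 ⟨ENNReal.mul_ne_top (by simp) (by simp), by simp⟩
  have hd : ∀ x ∈ G M, ∀ d : ℝ≥0∞, d ≤ 1/2 → μ {y | edist (f x) (f y) ≤ d} ≤ c * d ^ t := by
    intro x hx d hd
    have hdt : d ≠ ⊤ := ne_top_of_le_ne_top (by simp) hd
    have hlim : Filter.Tendsto (fun r : ℝ => c * ENNReal.ofReal (r ^ t)) (𝓝[>] d.toReal) (𝓝 (c * d ^ t)) := by
      have : c * d ^ t = c * ENNReal.ofReal (d.toReal ^ t) := by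
        rw [← ENNReal.ofReal_rpow_of_nonneg (by simp) ht.le, ENNReal.ofReal_toReal hdt]
      rw [this]
      apply ENNReal.Tendsto.const_mul _ (Or.inr hct)
      apply ENNReal.tendsto_ofReal
      exact ((Real.continuousAt_rpow_const _ _ (Or.inr ht.le)).tendsto).mono_left nhdsWithin_le_nhds
    refine ge_of_tendsto hlim ?_
    have hd2 : d.toReal ≤ 1/2 := by
      have := ENNReal.toReal_mono (by simp) hd
      simpa using this
    filter_upwards [Ioc_mem_nhdsGT (show d.toReal < 1 by linarith)] with r hr
    have hr0 : 0 < r := lt_of_le_of_lt (by simp) hr.1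
    refine le_trans (measure_mono ?_) ((hreal x hx r hr0 hr.2).trans (by gcongr; simp [hc]))
    intro y hy
    simp only [mem_ofPred_eq] at hy ⊢
    rw [← Real.dist_eq, dist_edist]
    exact (ENNReal.toReal_mono hdt hy).trans hr.1.le
  set ν : Measure ℝ := (μ.restrict (G M)).map f with hν
  have hle : c⁻¹ • ν ≤ μH[t] := by
    refine Measure.le_hausdorffMeasure t _ (1/2) (by simp) ?_
    intro A hA
    have h1 : ν A ≤ c * Metric.ediam A ^ t := by
      rw [← Metric.ediam_closure]
      refine (measure_mono subset_closure).trans ?_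
      rw [hν, Measure.map_apply hf isClosed_closure.measurableSet,
        Measure.restrict_apply (hf isClosed_closure.measurableSet)]
      rcases (f ⁻¹' closure A ∩ G M).eq_empty_or_nonempty with he | ⟨x, hx1, hx2⟩
      · simp [he]
      · refine le_trans (measure_mono ?_) (hd x hx2 _ (by rwa [Metric.ediam_closure]))
        intro y hy
        exact Metric.edist_le_ediam_of_mem hx1 hy.1
    rw [Measure.smul_apply, smul_eq_mul]
    calc c⁻¹ * ν A ≤ c⁻¹ * (c * Metric.ediam A ^ t) := by gcongr
      _ = _ := by rw [← mul_assoc, ENNReal.inv_mul_cancel hc0 hct, one_mul]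
  have hpos : ν (f '' F) ≠ 0 := by
    have h1 : μ (G M) ≤ ν (f '' F) := by
      calc μ (G M) ≤ μ (f ⁻¹' (f '' F) ∩ G M) :=
            measure_mono (fun x hx => ⟨mem_image_of_mem f hx.1, hx⟩)
        _ ≤ μ.restrict (G M) (f ⁻¹' (f '' F)) := Measure.le_restrict_apply _ _
        _ ≤ ν (f '' F) := Measure.le_map_apply hf.aemeasurable _
    intro h0
    rw [h0] at h1
    exact hM (le_antisymm h1 (by simp))
  have : μH[((t.toNNReal : ℝ≥0) : ℝ)] (f '' F) ≠ 0 := by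
    rw [Real.coe_toNNReal _ ht.le]
    intro h0
    have h2 := hle (f '' F)
    rw [h0, Measure.smul_apply, smul_eq_mul] at h2
    have h3 := le_antisymm h2 (by simp)
    rcases mul_eq_zero.1 h3 with h4 | h4
    · exact hct (ENNReal.inv_eq_zero.1 h4)
    · exact hpos h4
  exact le_dimH_of_hausdorffMeasure_ne_zero this

theorem aux_density {X : Type*} [MetricSpace X] [SecondCountableTopology X] [MeasurableSpace X]
    [BorelSpace X] (s : ℝ) (hs : 0 < s) (μ : Measure X) [IsFiniteMeasure μ] (hμ : μ ≤ μH[s]) :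
    ∀ᵐ x ∂μ, ∃ M : ℕ, ∃ δ : ℝ, 0 < δ ∧ ∀ r : ℝ, 0 < r → r ≤ δ →
      μ (Metric.closedBall x r) ≤ M * ENNReal.ofReal (r ^ s) := by
  set A : Set X := {x | ¬ ∃ M : ℕ, ∃ δ : ℝ, 0 < δ ∧ ∀ r : ℝ, 0 < r → r ≤ δ →
      μ (Metric.closedBall x r) ≤ M * ENNReal.ofReal (r ^ s)} with hA
  change μ A = 0
  suffices h : μH[s] A = 0 from le_antisymm ((hμ A).trans h.le) (by simp)
  set T : ℕ → Set (X × ℝ) := fun n => {p | p.1 ∈ A ∧ 0 < p.2 ∧ p.2 ≤ 1 / ((n:ℝ) + 1) ∧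
    ((n + 1 : ℕ) : ℝ≥0∞) * ENNReal.ofReal (p.2 ^ s) < μ (Metric.closedBall p.1 p.2)} with hT
  have hV : ∀ n, ∃ u ⊆ T n, (u.PairwiseDisjoint fun a => Metric.closedBall a.1 a.2) ∧
      ∀ a ∈ T n, ∃ b ∈ u, Metric.closedBall a.1 a.2 ⊆ Metric.closedBall b.1 (5 * b.2) := fun n =>
    Vitali.exists_disjoint_subfamily_covering_enlargement_closedBall (T n) (fun p => p.1)
      (fun p => p.2) (1 / ((n:ℝ) + 1)) (fun a ha => ha.2.2.1) 5 (by norm_num)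
  choose u huT hud hucov using hV
  have hcount : ∀ n, Countable (u n) := fun n => by
    refine ((hud n).countable_of_nonempty_interior ?_).to_subtype
    intro p hp
    exact ⟨p.1, Metric.ball_subset_interior_closedBall (Metric.mem_ball_self (huT n hp).2.1)⟩
  have hdiam : ∀ n, ∀ i : u n, Metric.ediam (Metric.closedBall i.1.1 (5 * i.1.2)) ≤
      ENNReal.ofReal (10 * i.1.2) := by
    intro n i
    refine Metric.ediam_le_of_forall_dist_le ?_
    intro x hx y hy
    have := dist_triangle_right x y i.1.1
    rw [Metric.mem_closedBall] at hx hy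
    linarith
  have hle := Measure.hausdorffMeasure_le_liminf_tsum (ι := fun n => u n) s A (l := Filter.atTop)
    (fun n : ℕ => ENNReal.ofReal (10 * (1 / ((n:ℝ) + 1))))
    (by
      have := (tendsto_one_div_add_atTop_nhds_zero_nat (𝕜 := ℝ)).const_mul 10
      simpa using ENNReal.tendsto_ofReal this)
    (fun n i => Metric.closedBall i.1.1 (5 * i.1.2))
    (Filter.Eventually.of_forall fun n i => (hdiam n i).trans (by
      have := (huT n i.2).2.2.1
      gcongr))
    (Filter.Eventually.of_forall fun n x hx => by
      have hx' := hx
      simp only [hA, mem_ofPred_eq] at hx'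
      push Not at hx'
      obtain ⟨r, hr0, hr1, hr2⟩ := hx' (n+1) (1 / ((n:ℝ) + 1)) (by positivity)
      obtain ⟨b, hb, hb2⟩ := hucov n (x, r) ⟨hx, hr0, hr1, hr2⟩
      exact mem_iUnion.2 ⟨⟨b, hb⟩, hb2 (Metric.mem_closedBall_self hr0.le)⟩)
  refine le_antisymm (hle.trans ?_) (by simp)
  have hbound : ∀ n : ℕ, ∑' i : u n, Metric.ediam (Metric.closedBall i.1.1 (5 * i.1.2)) ^ s ≤
      (ENNReal.ofReal (10 ^ s) * μ univ) / ((n + 1 : ℕ) : ℝ≥0∞) := by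
    intro n
    rw [ENNReal.le_div_iff_mul_le (Or.inl (by simp)) (Or.inl (by simp)), mul_comm, ← ENNReal.tsum_mul_left]
    calc ∑' i : u n, ((n + 1 : ℕ) : ℝ≥0∞) * Metric.ediam (Metric.closedBall i.1.1 (5 * i.1.2)) ^ s
        ≤ ∑' i : u n, ENNReal.ofReal (10 ^ s) * μ (Metric.closedBall i.1.1 i.1.2) := by
          refine ENNReal.tsum_le_tsum fun i => ?_
          obtain ⟨-, h0, h1, h2⟩ := huT n i.2
          calc ((n + 1 : ℕ) : ℝ≥0∞) * Metric.ediam (Metric.closedBall i.1.1 (5 * i.1.2)) ^ s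
              ≤ ((n + 1 : ℕ) : ℝ≥0∞) * ENNReal.ofReal (10 * i.1.2) ^ s := by
                gcongr
                exact hdiam n i
            _ = ENNReal.ofReal (10 ^ s) * (((n + 1 : ℕ) : ℝ≥0∞) * ENNReal.ofReal (i.1.2 ^ s)) := by
                rw [ENNReal.ofReal_rpow_of_nonneg (by positivity) hs.le,
                  Real.mul_rpow (by norm_num) h0.le, ENNReal.ofReal_mul (by positivity)]
                ring
            _ ≤ _ := by gcongr
      _ = ENNReal.ofReal (10 ^ s) * ∑' i : u n, μ (Metric.closedBall i.1.1 i.1.2) :=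
          ENNReal.tsum_mul_left
      _ ≤ _ := by
          gcongr
          refine (tsum_meas_le_meas_iUnion_of_disjoint μ
            (fun i => Metric.isClosed_closedBall.measurableSet) ?_).trans (measure_mono (subset_univ _))
          exact (hud n).subtype _ _
  refine (Filter.liminf_le_liminf (Filter.Eventually.of_forall hbound)).trans ?_
  refine le_of_eq (Filter.Tendsto.liminf_eq ?_)
  have h1 : Filter.Tendsto (fun n : ℕ => ((n + 1 : ℕ) : ℝ≥0∞)) Filter.atTop (𝓝 ⊤) :=
    ENNReal.tendsto_nat_nhds_top.comp (Filter.tendsto_add_atTop_nat 1)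
  have := ENNReal.Tendsto.const_div (a := ENNReal.ofReal (10 ^ s) * μ univ) h1
    (Or.inr (ENNReal.mul_ne_top (by simp) (by simp)))
  simpa using this

theorem aux_potential {X : Type*} [MetricSpace X] [SecondCountableTopology X] [MeasurableSpace X]
    [BorelSpace X] (s t : ℝ) (ht : 0 < t) (hts : t < s) (μ : Measure X) [IsFiniteMeasure μ] (x : X)
    (h : ∃ M : ℕ, ∃ δ : ℝ, 0 < δ ∧ ∀ r : ℝ, 0 < r → r ≤ δ →
      μ (Metric.closedBall x r) ≤ M * ENNReal.ofReal (r ^ s)) :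
    ∫⁻ y, edist x y ^ (-t) ∂μ ≠ ⊤ := by
  obtain ⟨M, δ, hδ, h⟩ := h
  have hs : 0 < s := ht.trans hts
  have hx0 : μ {x} = 0 := by
    have hlim : Filter.Tendsto (fun r : ℝ => (M:ℝ≥0∞) * ENNReal.ofReal (r ^ s)) (𝓝[>] 0) (𝓝 0) := by
      have h1 : Filter.Tendsto (fun r : ℝ => r ^ s) (𝓝[>] 0) (𝓝 0) := by
        have := (Real.continuousAt_rpow_const 0 s (Or.inr hs.le)).tendsto
        rw [Real.zero_rpow hs.ne'] at this
        exact this.mono_left nhdsWithin_le_nhds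
      have := ENNReal.Tendsto.const_mul (a := (M:ℝ≥0∞)) (ENNReal.tendsto_ofReal h1) (Or.inr (by simp))
      simpa using this
    refine le_antisymm (ge_of_tendsto hlim ?_) (by simp)
    filter_upwards [Ioc_mem_nhdsGT hδ] with r hr
    refine (measure_mono ?_).trans (h r hr.1 hr.2)
    simpa using hr.1.le
  set ρ : ℕ → ℝ := fun k => δ * (1/2)^k with hρ
  have hρ0 : ∀ k, 0 < ρ k := fun k => by positivity
  have hpt : ∀ᵐ y ∂μ, edist x y ^ (-t) ≤ ENNReal.ofReal (δ ^ (-t)) +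
      ∑' k : ℕ, (Metric.closedBall x (ρ k)).indicator
        (fun _ => ENNReal.ofReal (ρ (k+1) ^ (-t))) y := by
    have hne : ∀ᵐ y ∂μ, y ∉ ({x} : Set X) := measure_eq_zero_iff_ae_notMem.1 hx0
    filter_upwards [hne] with y hy
    have hd : 0 < dist x y := dist_pos.2 (fun h => hy (by simp [h]))
    rw [edist_dist, ENNReal.ofReal_rpow_of_pos hd]
    rcases le_total δ (dist x y) with hc | hc
    · refine le_trans (ENNReal.ofReal_le_ofReal ?_) le_self_add
      exact Real.rpow_le_rpow_of_nonpos hδ hc (by linarith)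
    · obtain ⟨k, hk1, hk2⟩ := exists_nat_pow_near_of_lt_one (x := dist x y / δ) (y := (1/2:ℝ)) (by positivity)
        (by rwa [div_le_one hδ]) (by norm_num) (by norm_num)
      rw [lt_div_iff₀ hδ] at hk1
      rw [div_le_iff₀ hδ] at hk2
      refine le_trans ?_ le_add_self
      refine le_trans ?_ (ENNReal.le_tsum k)
      rw [indicator_of_mem]
      · apply ENNReal.ofReal_le_ofReal
        refine Real.rpow_le_rpow_of_nonpos (hρ0 _) ?_ (by linarith)
        simp only [hρ]; linarith
      · rw [Metric.mem_closedBall, dist_comm]; simp only [hρ]; linarith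
  refine ne_top_of_le_ne_top ?_ (lintegral_mono_ae hpt)
  rw [lintegral_add_left measurable_const]
  · refine ENNReal.add_ne_top.2 ⟨by simpa using ENNReal.mul_ne_top (by simp) (by simp), ?_⟩
    rw [lintegral_tsum (fun k => (measurable_const.indicator Metric.isClosed_closedBall.measurableSet).aemeasurable)]
    have hsum : Summable fun k : ℕ => (M : ℝ) * (δ^(s-t) * 2^t) * ((1/2:ℝ)^(s-t))^k := by
      apply Summable.mul_left
      apply summable_geometric_of_lt_one (by positivity)
      exact Real.rpow_lt_one (by norm_num) (by norm_num) (by linarith)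
    refine ne_top_of_le_ne_top hsum.tsum_ofReal_ne_top (ENNReal.tsum_le_tsum fun k => ?_)
    rw [lintegral_indicator_const Metric.isClosed_closedBall.measurableSet]
    have hk : ρ k ≤ δ := by
      simp only [hρ]
      exact mul_le_of_le_one_right hδ.le (pow_le_one₀ (by norm_num) (by norm_num))
    calc ENNReal.ofReal (ρ (k+1) ^ (-t)) * μ (Metric.closedBall x (ρ k))
        ≤ ENNReal.ofReal (ρ (k+1) ^ (-t)) * (M * ENNReal.ofReal (ρ k ^ s)) := by
          gcongr; exact h _ (hρ0 k) hk
      _ = ENNReal.ofReal (M * (ρ (k+1) ^ (-t) * ρ k ^ s)) := by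
          rw [ENNReal.ofReal_mul (by positivity), ENNReal.ofReal_mul (by have := hρ0 (k+1); positivity),
            ENNReal.ofReal_natCast]
          ring
      _ = _ := by
          congr 1
          have e1 : ρ (k+1) = ρ k * 2⁻¹ := by simp only [hρ, pow_succ]; ring
          have e2 : ρ k ^ (s - t) = δ^(s-t) * ((1/2:ℝ)^(s-t))^k := by
            simp only [hρ]
            rw [Real.mul_rpow hδ.le (by positivity), ← Real.rpow_natCast, ← Real.rpow_natCast,
              ← Real.rpow_mul (by norm_num), ← Real.rpow_mul (by norm_num), mul_comm (k:ℝ)]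
          have e3 : ρ k ^ (s-t) = ρ k ^ s * ρ k ^ (-t) := by
            rw [← Real.rpow_add (hρ0 k)]; rfl
          have e4 : (2⁻¹:ℝ)^(-t) = 2^t := by
            rw [Real.inv_rpow (by norm_num), Real.rpow_neg (by norm_num), inv_inv]
          rw [e1, Real.mul_rpow (hρ0 k).le (by norm_num), e4]
          linear_combination (M * 2^t) * (e2 - e3)

theorem aux_slab {V : Type*} [NormedAddCommGroup V] [InnerProductSpace ℝ V] [FiniteDimensional ℝ V]
    [MeasurableSpace V] [BorelSpace V] (e : V) (he : ‖e‖ = 1) (R β ρ : ℝ) :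
    volume {u : V | u ∈ Metric.closedBall (0:V) R ∧ |⟪e, u⟫ + β| ≤ ρ} ≤
      volume (Metric.closedBall (0:V) (R+1)) * ENNReal.ofReal (2 * ρ) := by
  set S := {u : V | u ∈ Metric.closedBall (0:V) R ∧ |⟪e, u⟫ + β| ≤ ρ} with hS
  have hSc : IsClosed S := by
    refine Metric.isClosed_closedBall.inter ?_
    exact isClosed_le (f := fun u : V => |⟪e, u⟫ + β|) (by fun_prop) continuous_const
  have hSm : MeasurableSet S := hSc.measurableSet
  have h1 : ∀ τ : ℝ, ∫⁻ u : V, S.indicator (fun _ => (1:ℝ≥0∞)) (u + (-τ) • e) = volume S := by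
    intro τ
    rw [lintegral_add_right_eq_self (fun u => S.indicator (fun _ => (1:ℝ≥0∞)) u) ((-τ) • e)]
    rw [lintegral_indicator_const hSm, one_mul]
  have hmeas : Measurable (fun p : ℝ × V => S.indicator (fun _ => (1:ℝ≥0∞)) (p.2 + (-p.1) • e)) :=
    (measurable_const.indicator hSm).comp (by fun_prop)
  calc volume S = ∫⁻ τ in Icc (0:ℝ) 1, volume S := by simp
    _ = ∫⁻ τ in Icc (0:ℝ) 1, ∫⁻ u : V, S.indicator (fun _ => (1:ℝ≥0∞)) (u + (-τ) • e) := by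
        simp_rw [h1]
    _ = ∫⁻ u : V, ∫⁻ τ in Icc (0:ℝ) 1, S.indicator (fun _ => (1:ℝ≥0∞)) (u + (-τ) • e) :=
        lintegral_lintegral_swap hmeas.aemeasurable
    _ ≤ ∫⁻ u : V, (Metric.closedBall (0:V) (R+1)).indicator (fun _ => ENNReal.ofReal (2 * ρ)) u := by
        refine lintegral_mono fun u => ?_
        by_cases hu : u ∈ Metric.closedBall (0:V) (R+1)
        · rw [indicator_of_mem hu]
          have hvol : ENNReal.ofReal (2 * ρ) =
              ∫⁻ τ : ℝ, (Icc (⟪e, u⟫ + β - ρ) (⟪e, u⟫ + β + ρ)).indicator (fun _ => (1:ℝ≥0∞)) τ := by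
            rw [lintegral_indicator_const measurableSet_Icc, one_mul, Real.volume_Icc]
            congr 1; ring
          rw [hvol]
          refine (setLIntegral_le_lintegral _ _).trans (lintegral_mono fun τ => ?_)
          by_cases hτ : u + (-τ) • e ∈ S
          · rw [indicator_of_mem hτ, indicator_of_mem]
            have h2 := hτ.2
            rw [inner_add_right, inner_smul_right, real_inner_self_eq_norm_sq, he, abs_le] at h2
            constructor <;> linarith [h2.1, h2.2]
          · rw [indicator_of_notMem hτ]; exact zero_le
        · rw [indicator_of_notMem hu]
          refine le_of_eq ?_
          rw [setLIntegral_congr_fun (g := fun _ => 0) measurableSet_Icc]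
          · simp
          · intro τ hτ
            refine indicator_of_notMem ?_ _
            intro hcon
            apply hu
            have h2 := hcon.1
            rw [mem_closedBall_zero_iff] at h2 ⊢
            have h3 : ‖u‖ ≤ ‖u + (-τ) • e‖ + ‖τ • e‖ := by
              calc ‖u‖ = ‖(u + (-τ) • e) + τ • e‖ := by congr 1; simp
                _ ≤ _ := norm_add_le _ _
            rw [norm_smul, he, Real.norm_eq_abs, abs_of_nonneg hτ.1] at h3
            linarith [hτ.2]
    _ = _ := by
        rw [lintegral_indicator_const Metric.isClosed_closedBall.measurableSet, mul_comm]

theorem aux_slab2 {V : Type*} [NormedAddCommGroup V] [InnerProductSpace ℝ V] [FiniteDimensional ℝ V]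
    [MeasurableSpace V] [BorelSpace V] (R : ℝ) (hR : 1 ≤ R) (p : V × ℝ) (hp : p ≠ 0) (r : ℝ) (hr : 0 < r) :
    volume {u : V | u ∈ Metric.closedBall (0:V) R ∧ |⟪p.1, u⟫ + p.2| ≤ r} ≤
      volume (Metric.closedBall (0:V) (R+1)) * ENNReal.ofReal (4 * R * (r / ‖p‖)) := by
  obtain ⟨a, b⟩ := p
  have hp0 : 0 < ‖(a, b)‖ := norm_pos_iff.2 hp
  have hnorm : ‖(a, b)‖ = max ‖a‖ |b| := rfl
  simp only
  rcases le_or_gt (2 * R * ‖a‖) |b| with hc | hc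
  · have hab : ‖(a, b)‖ = |b| := by
      rw [hnorm]; apply max_eq_right
      nlinarith [norm_nonneg a]
    rcases ({u : V | u ∈ Metric.closedBall (0:V) R ∧ |⟪a, u⟫ + b| ≤ r}).eq_empty_or_nonempty with h0 | ⟨u, hu1, hu2⟩
    · rw [h0]; simp
    · have h1 : |b| ≤ 2 * r := by
        have h2 : |⟪a, u⟫| ≤ ‖a‖ * R := (abs_real_inner_le_norm a u).trans (by
          rw [mem_closedBall_zero_iff] at hu1; gcongr)
        have h3 : |b| ≤ |⟪a, u⟫ + b| + |⟪a, u⟫| := by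
          have := abs_sub (⟪a, u⟫ + b) ⟪a, u⟫
          simpa using this
        nlinarith
      calc _ ≤ volume (Metric.closedBall (0:V) (R+1)) * 1 := by
            rw [mul_one]
            exact measure_mono (fun u hu => Metric.closedBall_subset_closedBall (by linarith) hu.1)
        _ ≤ _ := by
            gcongr
            rw [ENNReal.one_le_ofReal, hab]
            rw [hab] at hp0
            rw [← mul_div_assoc, le_div_iff₀ hp0]
            nlinarith
  · have ha : 0 < ‖a‖ := by
      by_contra h
      have : ‖a‖ = 0 := le_antisymm (not_lt.1 h) (norm_nonneg a)
      rw [this] at hc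
      linarith [abs_nonneg b]
    have hab : ‖(a, b)‖ ≤ 2 * R * ‖a‖ := by
      rw [hnorm]; apply max_le _ hc.le
      nlinarith
    have hs := aux_slab (‖a‖⁻¹ • a) (by rw [norm_smul, norm_inv, norm_norm, inv_mul_cancel₀ ha.ne']) R (‖a‖⁻¹ * b) (‖a‖⁻¹ * r)
    refine (measure_mono ?_).trans (hs.trans ?_)
    · rintro u ⟨hu1, hu2⟩
      refine ⟨hu1, ?_⟩
      rw [real_inner_smul_left, ← mul_add, abs_mul, abs_of_pos (inv_pos.2 ha)]
      gcongr
    · gcongr _ * ENNReal.ofReal ?_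
      rw [← mul_div_assoc, le_div_iff₀ hp0]
      calc 2 * (‖a‖⁻¹ * r) * ‖(a, b)‖ ≤ 2 * (‖a‖⁻¹ * r) * (2 * R * ‖a‖) := by gcongr
        _ = 4 * R * r := by field_simp; ring

theorem aux_slab3 {V : Type*} [NormedAddCommGroup V] [InnerProductSpace ℝ V] [FiniteDimensional ℝ V]
    [MeasurableSpace V] [BorelSpace V] (R : ℝ) (hR : 1 ≤ R) : ∃ C : ℝ≥0∞, C ≠ ⊤ ∧
    ∀ x y : V × ℝ, ∀ r t : ℝ, 0 < r → 0 < t → t < 1 →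
    volume {u : V | u ∈ Metric.closedBall (0:V) R ∧ |(⟪x.1, u⟫ + x.2) - (⟪y.1, u⟫ + y.2)| ≤ r} ≤
      C * (ENNReal.ofReal (r ^ t) * edist x y ^ (-t)) := by
  set L := volume (Metric.closedBall (0:V) (R+1)) with hL
  have hLt : L ≠ ⊤ := measure_closedBall_lt_top.ne
  refine ⟨L * ENNReal.ofReal (4 * R) + 1, by finiteness, ?_⟩
  intro x y r t hr ht ht1
  by_cases hxy : x = y
  · subst hxy
    have h0 : ENNReal.ofReal (r ^ t) ≠ 0 := by
      have : 0 < r ^ t := by positivity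
      simpa using this
    rw [edist_self, ENNReal.zero_rpow_of_neg (by linarith), ENNReal.mul_top h0, ENNReal.mul_top (by simp)]
    exact le_top
  have hp : x - y ≠ 0 := sub_ne_zero.2 hxy
  have hp0 : 0 < ‖x - y‖ := norm_pos_iff.2 hp
  have hset : {u : V | u ∈ Metric.closedBall (0:V) R ∧ |(⟪x.1, u⟫ + x.2) - (⟪y.1, u⟫ + y.2)| ≤ r} =
      {u : V | u ∈ Metric.closedBall (0:V) R ∧ |⟪(x - y).1, u⟫ + (x - y).2| ≤ r} := by
    ext u
    simp only [mem_ofPred_eq, Prod.fst_sub, Prod.snd_sub, inner_sub_left]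
    rw [show ⟪x.1, u⟫ + x.2 - (⟪y.1, u⟫ + y.2) = ⟪x.1, u⟫ - ⟪y.1, u⟫ + (x.2 - y.2) by ring]
  rw [hset]
  have key : volume {u : V | u ∈ Metric.closedBall (0:V) R ∧ |⟪(x - y).1, u⟫ + (x - y).2| ≤ r} ≤
      L * ENNReal.ofReal (4 * R * (r / ‖x - y‖) ^ t) := by
    rcases le_total (r / ‖x - y‖) 1 with h1 | h1
    · refine (aux_slab2 R hR (x - y) hp r hr).trans ?_
      gcongr
      calc r / ‖x - y‖ = (r / ‖x - y‖) ^ (1:ℝ) := by simp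
        _ ≤ _ := Real.rpow_le_rpow_of_exponent_ge (by positivity) h1 ht1.le
    · calc _ ≤ L * 1 := by
            rw [mul_one]
            exact measure_mono (fun u hu => Metric.closedBall_subset_closedBall (by linarith) hu.1)
        _ ≤ _ := by
            gcongr
            rw [ENNReal.one_le_ofReal]
            have := Real.one_le_rpow h1 ht.le
            nlinarith
  refine key.trans ?_
  rw [edist_dist, dist_eq_norm, ENNReal.ofReal_rpow_of_pos hp0, ← ENNReal.ofReal_mul (by positivity),
    ENNReal.ofReal_mul (by positivity), ← mul_assoc, Real.div_rpow hr.le hp0.le, Real.rpow_neg hp0.le, div_eq_mul_inv]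
  gcongr
  exact le_self_add

theorem aux_ae {V : Type*} [NormedAddCommGroup V] [InnerProductSpace ℝ V] [FiniteDimensional ℝ V]
    [MeasurableSpace V] [BorelSpace V] (μ : Measure (V × ℝ)) [IsFiniteMeasure μ] (t t' : ℝ)
    (ht' : 0 < t') (htt : t' < t) (ht1 : t < 1)
    (h : ∀ᵐ x ∂μ, ∫⁻ y, edist x y ^ (-t) ∂μ ≠ ⊤) :
    ∀ᵐ u : V, ∀ᵐ x ∂μ, ∃ M : ℕ, ∀ k : ℕ,
      μ {y | |(⟪x.1, u⟫ + x.2) - (⟪y.1, u⟫ + y.2)| ≤ (1/2:ℝ)^k} ≤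
        M * ENNReal.ofReal (((1/2:ℝ)^k)^t') := by
  have : SecondCountableTopology V := inferInstance
  set w : ℕ → ℝ≥0∞ := fun k => ENNReal.ofReal (((1/2:ℝ)^k)^t') with hw
  have hw0 : ∀ k, w k ≠ 0 := fun k => by
    have : 0 < ((1/2:ℝ)^k)^t' := by positivity
    simpa [hw] using this
  have hwt : ∀ k, w k ≠ ⊤ := fun k => by simp [hw]
  obtain ⟨Φ, hΦ⟩ : ∃ Φ : (V × ℝ) → V → ℝ≥0∞, Φ = fun x u => ∑' k : ℕ, (w k)⁻¹ *
    μ {y | |(⟪x.1, u⟫ + x.2) - (⟪y.1, u⟫ + y.2)| ≤ (1/2:ℝ)^k} := ⟨_, rfl⟩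
  have hΦm : Measurable (fun p : (V × ℝ) × V => Φ p.1 p.2) := by
    simp only [hΦ]
    refine Measurable.tsum fun k => Measurable.const_mul ?_ _
    exact measurable_measure_prodMk_left (ν := μ)
      (s := {q : ((V × ℝ) × V) × (V × ℝ) |
        |(⟪q.1.1.1, q.1.2⟫ + q.1.1.2) - (⟪q.2.1, q.1.2⟫ + q.2.2)| ≤ (1/2:ℝ)^k})
      (isClosed_le (by fun_prop) continuous_const).measurableSet
  have main : ∀ N : ℕ, ∀ᵐ u ∂(volume.restrict (Metric.closedBall (0:V) ((N:ℝ)+1))), ∀ᵐ x ∂μ,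
      Φ x u < ⊤ := by
    intro N
    rw [← Measure.ae_ae_comm (p := fun x u => Φ x u < ⊤) (measurableSet_lt hΦm measurable_const)]
    obtain ⟨C, hC, hCb⟩ := aux_slab3 (V := V) ((N:ℝ)+1) (by simp)
    filter_upwards [h] with x hx
    have hm0 : Measurable (fun u : V => Φ x u) := hΦm.comp (measurable_prodMk_left (x := x))
    refine ae_lt_top hm0 ?_
    simp only [hΦ]
    have hcl : ∀ k : ℕ, MeasurableSet {q : V × (V × ℝ) |
        |(⟪x.1, q.1⟫ + x.2) - (⟪q.2.1, q.1⟫ + q.2.2)| ≤ (1/2:ℝ)^k} := fun k =>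
      (isClosed_le (by fun_prop) continuous_const).measurableSet
    have hm1 : ∀ k : ℕ, Measurable fun u : V =>
        μ {y | |(⟪x.1, u⟫ + x.2) - (⟪y.1, u⟫ + y.2)| ≤ (1/2:ℝ)^k} := fun k =>
      measurable_measure_prodMk_left (hcl k)
    rw [lintegral_tsum (fun k => ((hm1 k).const_mul _).aemeasurable)]
    have hsum : Summable fun k : ℕ => ((1/2:ℝ)^(t-t'))^k := by
      apply summable_geometric_of_lt_one (by positivity)
      exact Real.rpow_lt_one (by norm_num) (by norm_num) (by linarith)
    have hfin : (∑' k : ℕ, ENNReal.ofReal (((1/2:ℝ)^(t-t'))^k)) * (C * ∫⁻ y, edist x y ^ (-t) ∂μ) ≠ ⊤ :=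
      ENNReal.mul_ne_top hsum.tsum_ofReal_ne_top (ENNReal.mul_ne_top hC hx)
    refine ne_top_of_le_ne_top hfin ?_
    rw [← ENNReal.tsum_mul_right]
    refine ENNReal.tsum_le_tsum fun k => ?_
    rw [lintegral_const_mul _ (hm1 k)]
    have hfub : ∫⁻ u in Metric.closedBall (0:V) ((N:ℝ)+1),
        μ {y | |(⟪x.1, u⟫ + x.2) - (⟪y.1, u⟫ + y.2)| ≤ (1/2:ℝ)^k} ≤
        C * (ENNReal.ofReal (((1/2:ℝ)^k)^t) * ∫⁻ y, edist x y ^ (-t) ∂μ) := by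
      have e1 := Measure.prod_apply (μ := volume.restrict (Metric.closedBall (0:V) ((N:ℝ)+1))) (ν := μ) (hcl k)
      have e2 := Measure.prod_apply_symm (μ := volume.restrict (Metric.closedBall (0:V) ((N:ℝ)+1))) (ν := μ) (hcl k)
      refine (e1.symm.trans e2).le.trans ?_
      rw [← lintegral_const_mul' _ _ (by simp), ← lintegral_const_mul' _ _ hC]
      refine lintegral_mono fun y => ?_
      refine le_trans (le_of_eq ?_) (hCb x y ((1/2:ℝ)^k) t (by positivity) (by linarith) ht1)
      rw [Measure.restrict_apply (measurable_prodMk_right (hcl k)), inter_comm]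
      rfl
    calc _ ≤ (w k)⁻¹ * (C * (ENNReal.ofReal (((1/2:ℝ)^k)^t) * ∫⁻ y, edist x y ^ (-t) ∂μ)) := by gcongr
      _ = ((w k)⁻¹ * ENNReal.ofReal (((1/2:ℝ)^k)^t)) * (C * ∫⁻ y, edist x y ^ (-t) ∂μ) := by ring
      _ = _ := by
        congr 1
        simp only [hw]
        rw [← ENNReal.ofReal_inv_of_pos (by positivity), ← ENNReal.ofReal_mul (by positivity)]
        congr 1
        have e : ∀ a : ℝ, ((1/2:ℝ)^k)^a = ((1/2:ℝ)^a)^k := fun a =>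
          (Real.rpow_pow_comm (by norm_num) a k).symm
        rw [e, e, Real.rpow_sub (by norm_num), div_pow, ← div_eq_inv_mul]
  have main2 : ∀ᵐ u : V, ∀ᵐ x ∂μ, Φ x u < ⊤ := by
    have hU : (⋃ N : ℕ, Metric.closedBall (0:V) ((N:ℝ)+1)) = univ := by
      refine eq_univ_of_forall fun u => mem_iUnion.2 ?_
      obtain ⟨N, hN⟩ := exists_nat_ge ‖u‖
      exact ⟨N, by rw [mem_closedBall_zero_iff]; linarith⟩
    rw [← Measure.restrict_univ (μ := (volume : Measure V)), ← hU, ae_restrict_iUnion_iff]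
    exact main
  filter_upwards [main2] with u hu
  filter_upwards [hu] with x hx
  simp only [hΦ] at hx
  obtain ⟨M, hM⟩ := ENNReal.exists_nat_gt hx.ne
  refine ⟨M, fun k => ?_⟩
  have h1 := (ENNReal.le_tsum k).trans hM.le
  rw [mul_comm, ← div_eq_mul_inv, ENNReal.div_le_iff (hw0 k) (hwt k)] at h1
  exact h1

end Aux

/-- **Strong projection theorem for the dual maps `π_u`, dimension part.**
If `E ⊆ ℝⁿ = ℝ^{n−1} × ℝ` is `𝓗ˢ`-measurable with `0 < 𝓗ˢ(E) < ∞` where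
`s = dim_H E > 0`, then there is a Lebesgue null set `X ⊆ ℝ^{n−1}` such that for every
`u ∉ X` and every `𝓗ˢ`-measurable `F ⊆ E` with `𝓗ˢ(F) > 0`,
`dim_H π_u(F) = min {s, 1}`. -/
theorem strong_dualProj_dimension (n : ℕ) (hn : 2 ≤ n) (s : ℝ) (hs : 0 < s)
    (E : Set (EuclideanSpace ℝ (Fin (n - 1)) × ℝ))
    (hdimE : dimH E = ENNReal.ofReal s)
    (hE : NullMeasurableSet E μH[s])
    (hE0 : 0 < μH[s] E) (hEfin : μH[s] E < ⊤) :
    ∃ X : Set (EuclideanSpace ℝ (Fin (n - 1))), volume X = 0 ∧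
      ∀ u : EuclideanSpace ℝ (Fin (n - 1)), u ∉ X →
        ∀ F : Set (EuclideanSpace ℝ (Fin (n - 1)) × ℝ), F ⊆ E →
          NullMeasurableSet F μH[s] → 0 < μH[s] F →
          dimH (dualProj u '' F) = min (ENNReal.ofReal s) 1 := by
  classical
  set μ : Measure (EuclideanSpace ℝ (Fin (n - 1)) × ℝ) := Measure.restrict μH[s] E with hμ
  have hfin : IsFiniteMeasure μ := ⟨by rw [hμ, Measure.restrict_apply_univ]; exact hEfin⟩
  have hdens := aux_density s hs μ Measure.restrict_le_self
  have hq : ∀ᵐ u : EuclideanSpace ℝ (Fin (n - 1)), ∀ q : ℚ, 0 < (q : ℝ) → (q : ℝ) < min s 1 →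
      ∀ᵐ x ∂μ, ∃ M : ℕ, ∀ k : ℕ,
      μ {y | |(⟪x.1, u⟫ + x.2) - (⟪y.1, u⟫ + y.2)| ≤ (1/2:ℝ)^k} ≤
        M * ENNReal.ofReal (((1/2:ℝ)^k)^(q : ℝ)) := by
    rw [ae_all_iff]
    intro q
    by_cases hq0 : 0 < (q : ℝ)
    swap
    · exact Filter.Eventually.of_forall fun u h => absurd h hq0
    by_cases hq1 : (q : ℝ) < min s 1
    swap
    · exact Filter.Eventually.of_forall fun u _ h => absurd h hq1
    obtain ⟨t, ht1, ht2⟩ := exists_between hq1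
    rw [lt_min_iff] at ht2
    have hpot : ∀ᵐ x ∂μ, ∫⁻ y, edist x y ^ (-t) ∂μ ≠ ⊤ := by
      filter_upwards [hdens] with x hx
      exact aux_potential s t (hq0.trans ht1) ht2.1 μ x hx
    filter_upwards [aux_ae μ t q hq0 ht1 ht2.2 hpot] with u hu _ _
    exact hu
  refine ⟨_, ae_iff.1 hq, ?_⟩
  intro u hu F hFE _ hF0
  have hu' : ∀ q : ℚ, 0 < (q : ℝ) → (q : ℝ) < min s 1 →
      ∀ᵐ x ∂μ, ∃ M : ℕ, ∀ k : ℕ,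
      μ {y | |(⟪x.1, u⟫ + x.2) - (⟪y.1, u⟫ + y.2)| ≤ (1/2:ℝ)^k} ≤
        M * ENNReal.ofReal (((1/2:ℝ)^k)^(q : ℝ)) := not_not.1 hu
  have hμF : μ F ≠ 0 := by
    have h1 : μH[s] (F ∩ E) ≤ μ F := Measure.le_restrict_apply _ _
    rw [Set.inter_eq_left.2 hFE] at h1
    exact (hF0.trans_le h1).ne'
  apply le_antisymm
  · refine le_min ?_ ?_
    · have hlip : LipschitzWith (‖u‖₊ + 1) (dualProj u) := by
        refine LipschitzWith.of_dist_le_mul fun x y => ?_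
        rw [Real.dist_eq, dist_eq_norm]
        have h1 : dualProj u x - dualProj u y = ⟪(x - y).1, u⟫ + (x - y).2 := by
          simp only [dualProj, Prod.fst_sub, Prod.snd_sub, inner_sub_left]
          ring
        rw [h1]
        have h2 : ‖(x - y).1‖ ≤ ‖x - y‖ := norm_fst_le _
        have h3 : |(x - y).2| ≤ ‖x - y‖ := (Real.norm_eq_abs _).symm.le.trans (norm_snd_le (x - y))
        calc |⟪(x - y).1, u⟫ + (x - y).2| ≤ |⟪(x - y).1, u⟫| + |(x - y).2| := abs_add_le _ _
          _ ≤ ‖x - y‖ * ‖u‖ + ‖x - y‖ := by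
              gcongr
              exact (abs_real_inner_le_norm _ _).trans (by gcongr)
          _ = _ := by push_cast; ring
      exact (hlip.dimH_image_le F).trans ((dimH_mono hFE).trans hdimE.le)
    · exact (dimH_mono (Set.subset_univ _)).trans Real.dimH_univ.le
  · by_contra hlt
    rw [not_le, ENNReal.lt_iff_exists_rat_btwn] at hlt
    obtain ⟨q, hq0, hq1, hq2⟩ := hlt
    have hq0' : 0 < (q : ℝ) := by
      have := lt_of_le_of_lt (zero_le) hq1
      simpa using this
    have hq2' : (q : ℝ) < min s 1 := by
      change ENNReal.ofReal (q : ℝ) < _ at hq2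
      rw [lt_min_iff] at hq2 ⊢
      refine ⟨(ENNReal.ofReal_lt_ofReal_iff hs).1 hq2.1, ?_⟩
      have := hq2.2
      rw [← ENNReal.ofReal_one] at this
      exact (ENNReal.ofReal_lt_ofReal_iff one_pos).1 this
    have hm : Measurable (dualProj u) := by
      unfold dualProj
      fun_prop
    have := aux_dim μ (dualProj u) hm q hq0' F hμF (hu' q hq0' hq2')
    exact absurd hq1 (not_lt.2 this)
end

section
/- Let n ≥ 2 and let E ⊂ ℝⁿ = ℝ^{n−1} × ℝ be an 𝓗ˢ-measurable set with 0 < 𝓗ˢ(E) < ∞, where s = dim_H E > 1. Then there exists a set X ⊂ ℝ^{n−1} with 𝓛^{n−1}(X) = 0 such that for every u ∈ ℝ^{n−1} \ X and every 𝓗ˢ-measurable set F ⊂ E with 𝓗ˢ(F) > 0, the set π_u(F) ⊂ ℝ has positive one-dimensional Lebesgue measure: 𝓛¹(π_u(F)) > 0. -/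
open MeasureTheory RealInnerProductSpace

open Set Filter Topology Metric
open scoped ENNReal NNReal

/-- Points of infinite upper `s`-density of a finite measure are `μH[s]`-null. -/
lemma density_null {X : Type*} [MetricSpace X] [SecondCountableTopology X]
    [MeasurableSpace X] [BorelSpace X] (μ : Measure X) [IsFiniteMeasure μ] (s : ℝ) (hs : 0 < s) :
    μH[s] {x | ∀ k : ℕ, ∃ r : ℝ, 0 < r ∧
      (k : ℝ≥0∞) * ENNReal.ofReal r ^ s < μ (closedBall x r)} = 0 := by
  set A := {x | ∀ k : ℕ, ∃ r : ℝ, 0 < r ∧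
      (k : ℝ≥0∞) * ENNReal.ofReal r ^ s < μ (closedBall x r)} with hA
  set M := μ univ with hM
  have hMtop : M ≠ ⊤ := measure_ne_top _ _
  have hch : ∀ k : ℕ, ∀ x : A, ∃ r : ℝ, 0 < r ∧
      ((k + 1 : ℕ) : ℝ≥0∞) * ENNReal.ofReal r ^ s < μ (closedBall x.1 r) :=
    fun k x => x.2 (k + 1)
  choose r hr0 hr using hch
  have hrs : ∀ k x, ENNReal.ofReal (r k x) ^ s ≤ M / ((k + 1 : ℕ) : ℝ≥0∞) := by
    intro k x
    rw [ENNReal.le_div_iff_mul_le (by simp) (by simp), mul_comm]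
    exact (hr k x).le.trans (measure_mono (subset_univ _))
  have hrE : ∀ k x, ENNReal.ofReal (r k x) ≤ (M / ((k + 1 : ℕ) : ℝ≥0∞)) ^ (1 / s) := by
    intro k x
    rw [one_div, ENNReal.le_rpow_inv_iff hs]
    exact hrs k x
  have htopk : ∀ k : ℕ, (M / ((k + 1 : ℕ) : ℝ≥0∞)) ^ (1 / s) ≠ ⊤ := by
    intro k
    apply ENNReal.rpow_ne_top_of_nonneg (by positivity)
    exact ENNReal.div_ne_top hMtop (by simp)
  have hrR : ∀ k x, r k x ≤ ((M / ((k + 1 : ℕ) : ℝ≥0∞)) ^ (1 / s)).toReal := by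
    intro k x
    rw [← ENNReal.ofReal_le_iff_le_toReal (htopk k)]
    exact hrE k x
  have hV := fun k : ℕ => Vitali.exists_disjoint_subfamily_covering_enlargement_closedBall
    (univ : Set A) (fun x : A => x.1) (r k) _ (fun a _ => hrR k a) 5 (by norm_num)
  choose u _ hdisj hcov using hV
  have hcount : ∀ k, (u k).Countable := fun k =>
    (hdisj k).countable_of_nonempty_interior fun a _ =>
      (nonempty_ball.2 (hr0 k a)).mono ball_subset_interior_closedBall
  haveI : ∀ k, Countable (u k) := fun k => (hcount k).to_subtype
  have hlim1 : Tendsto (fun k : ℕ => M / ((k + 1 : ℕ) : ℝ≥0∞)) atTop (𝓝 0) := by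
    have := (ENNReal.tendsto_inv_nat_nhds_zero.comp (tendsto_add_atTop_nat 1))
    have h2 := ENNReal.Tendsto.const_mul (a := M) this (Or.inr hMtop)
    simpa [div_eq_mul_inv, Function.comp_def] using h2
  have hdiam : ∀ k (i : u k), ediam (closedBall i.1.1 (5 * r k i.1)) ≤
      10 * ENNReal.ofReal (r k i.1) := by
    intro k i
    rw [← Metric.closedEBall_ofReal (by have := hr0 k i.1; positivity)]
    refine (Metric.ediam_closedEBall_le).trans ?_
    rw [ENNReal.ofReal_mul (by norm_num), ← mul_assoc]
    gcongr
    norm_num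
  have key := Measure.hausdorffMeasure_le_liminf_tsum (ι := fun k : ℕ => u k) s A (l := atTop)
    (fun k => 10 * (M / ((k + 1 : ℕ) : ℝ≥0∞)) ^ (1 / s)) ?_
    (fun k i => closedBall i.1.1 (5 * r k i.1)) ?_ ?_
  rotate_left
  · have h3 : Tendsto (fun k : ℕ => (M / ((k + 1 : ℕ) : ℝ≥0∞)) ^ (1 / s)) atTop (𝓝 0) := by
      have := (ENNReal.continuous_rpow_const (y := 1 / s)).tendsto 0 |>.comp hlim1
      rwa [ENNReal.zero_rpow_of_pos (by positivity)] at this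
    have h2 := ENNReal.Tendsto.const_mul (a := 10) h3 (Or.inr (by simp))
    simpa using h2
  · refine Eventually.of_forall fun k i => (hdiam k i).trans ?_
    gcongr
    exact hrE k _
  · refine Eventually.of_forall fun k x hx => ?_
    obtain ⟨b, hb, hsub⟩ := hcov k ⟨x, hx⟩ (mem_univ _)
    exact mem_iUnion.2 ⟨⟨b, hb⟩, hsub (mem_closedBall_self (hr0 k _).le)⟩
  have hsum : ∀ k : ℕ, ∑' i : u k, ediam (closedBall i.1.1 (5 * r k i.1)) ^ s ≤
      10 ^ s * (M / ((k + 1 : ℕ) : ℝ≥0∞)) := by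
    intro k
    calc ∑' i : u k, ediam (closedBall i.1.1 (5 * r k i.1)) ^ s
        ≤ ∑' i : u k, (10 ^ s * ((k + 1 : ℕ) : ℝ≥0∞)⁻¹) * μ (closedBall i.1.1 (r k i.1)) := by
          refine ENNReal.tsum_le_tsum fun i => ?_
          calc _ ≤ (10 * ENNReal.ofReal (r k i.1)) ^ s :=
                ENNReal.rpow_le_rpow (hdiam k i) hs.le
            _ = 10 ^ s * ENNReal.ofReal (r k i.1) ^ s := ENNReal.mul_rpow_of_nonneg _ _ hs.le
            _ ≤ _ := by
              rw [mul_assoc]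
              gcongr
              rw [mul_comm, ← div_eq_mul_inv, ENNReal.le_div_iff_mul_le (by simp) (by simp),
                mul_comm]
              exact (hr k i.1).le
      _ = (10 ^ s * ((k + 1 : ℕ) : ℝ≥0∞)⁻¹) * ∑' i : u k, μ (closedBall i.1.1 (r k i.1)) :=
          ENNReal.tsum_mul_left
      _ ≤ (10 ^ s * ((k + 1 : ℕ) : ℝ≥0∞)⁻¹) * M := by
          gcongr
          refine tsum_measure_le_measure_univ
            (fun i => isClosed_closedBall.measurableSet.nullMeasurableSet) ?_
          intro i j hij
          exact (hdisj k i.2 j.2 (fun h => hij (Subtype.ext h))).aedisjoint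
      _ = _ := by rw [div_eq_mul_inv]; ring
  have hlim2 : Tendsto (fun k : ℕ => (10 : ℝ≥0∞) ^ s * (M / ((k + 1 : ℕ) : ℝ≥0∞))) atTop (𝓝 0) := by
    have h2 := ENNReal.Tendsto.const_mul (a := (10 : ℝ≥0∞) ^ s) hlim1
      (Or.inr (ENNReal.rpow_ne_top_of_nonneg hs.le (by simp)))
    simpa using h2
  refine le_antisymm (key.trans ?_) zero_le
  rw [← hlim2.liminf_eq]
  exact liminf_le_liminf (Eventually.of_forall hsum)

lemma ofReal_half_pow (j : ℕ) : ENNReal.ofReal ((1 / 2) ^ j) = ((2 : ℝ≥0∞) ^ j)⁻¹ := by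
  rw [one_div, inv_pow, ENNReal.ofReal_inv_of_pos (by positivity), ENNReal.ofReal_pow (by norm_num)]
  simp

/-- Dyadic estimate for the potential of a measure. -/
lemma potential_le {X : Type*} [MetricSpace X] [MeasurableSpace X] [BorelSpace X]
    (μ : Measure X) (s : ℝ) (x : X) (k : ℕ)
    (h : ∀ j : ℕ, μ (ball x ((1 / 2) ^ j)) ≤ k * ENNReal.ofReal ((1 / 2) ^ j) ^ s) :
    ∫⁻ y, (edist x y)⁻¹ ∂μ ≤
      μ univ + ∑' j : ℕ, 2 ^ (j + 1) * (k * ENNReal.ofReal ((1 / 2) ^ j) ^ s) := by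
  have hpt : ∀ y, (edist x y)⁻¹ ≤
      1 + ∑' j : ℕ, (ball x ((1 / 2) ^ j)).indicator (fun _ => (2 : ℝ≥0∞) ^ (j + 1)) y := by
    intro y
    by_cases h1 : 1 ≤ dist x y
    · refine le_add_right ?_
      rw [ENNReal.inv_le_one, edist_dist, ENNReal.one_le_ofReal]
      exact h1
    push Not at h1
    refine le_add_left ?_
    by_cases h0 : x = y
    · subst h0
      have : ∀ j : ℕ, (ball x ((1 / 2) ^ j)).indicator (fun _ => (2 : ℝ≥0∞) ^ (j + 1)) x
          = 2 ^ (j + 1) := fun j => indicator_of_mem (mem_ball_self (by positivity)) _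
      simp_rw [this]
      have hle : ∑' j : ℕ, (1 : ℝ≥0∞) ≤ ∑' j : ℕ, (2 : ℝ≥0∞) ^ (j + 1) :=
        ENNReal.tsum_le_tsum fun j => one_le_pow₀ (by norm_num)
      rw [ENNReal.tsum_const_eq_top_of_ne_zero one_ne_zero] at hle
      exact le_top.trans hle
    · have hd : 0 < dist x y := dist_pos.2 h0
      obtain ⟨j, hj1, hj2⟩ := exists_nat_pow_near_of_lt_one hd h1.le (y := (1 / 2 : ℝ))
        (by norm_num) (by norm_num)
      by_cases hj3 : dist x y = (1 / 2) ^ j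
      · cases j with
        | zero => simp at hj3; linarith
        | succ j =>
          refine le_trans ?_ (ENNReal.le_tsum j)
          rw [indicator_of_mem]
          · rw [edist_dist, hj3, ofReal_half_pow, inv_inv]
          · rw [mem_ball', hj3]
            exact pow_lt_pow_right_of_lt_one₀ (by norm_num) (by norm_num) (by simp)
      · refine le_trans ?_ (ENNReal.le_tsum j)
        rw [indicator_of_mem]
        · rw [ENNReal.inv_le_iff_inv_le, edist_dist]
          refine le_trans ?_ (ENNReal.ofReal_le_ofReal hj1.le)
          rw [ofReal_half_pow]
        · rw [mem_ball']
          exact lt_of_le_of_ne hj2 hj3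
  calc ∫⁻ y, (edist x y)⁻¹ ∂μ ≤ ∫⁻ y, (1 + ∑' j : ℕ,
          (ball x ((1 / 2) ^ j)).indicator (fun _ => (2 : ℝ≥0∞) ^ (j + 1)) y) ∂μ :=
        lintegral_mono hpt
    _ = μ univ + ∑' j : ℕ, 2 ^ (j + 1) * μ (ball x ((1 / 2) ^ j)) := by
        rw [lintegral_add_left measurable_const, lintegral_tsum]
        · simp [lintegral_indicator_const, measurableSet_ball]
        · exact fun j => (measurable_const.indicator measurableSet_ball).aemeasurable
    _ ≤ _ := by
        gcongr with j
        exact h j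

lemma potential_const_ne_top (M : ℝ≥0∞) (hM : M ≠ ⊤) (s : ℝ) (hs : 1 < s) (k : ℕ) :
    M + ∑' j : ℕ, 2 ^ (j + 1) * ((k : ℝ≥0∞) * ENNReal.ofReal ((1 / 2) ^ j) ^ s) ≠ ⊤ := by
  refine ENNReal.add_ne_top.2 ⟨hM, ?_⟩
  have : ∀ j : ℕ, 2 ^ (j + 1) * ((k : ℝ≥0∞) * ENNReal.ofReal ((1 / 2) ^ j) ^ s)
      = ENNReal.ofReal (2 * k * ((2 : ℝ) ^ (1 - s)) ^ j) := by
    intro j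
    rw [ENNReal.ofReal_rpow_of_pos (by positivity)]
    rw [← ENNReal.ofReal_natCast k, ← ENNReal.ofReal_mul (by positivity)]
    rw [show (2 : ℝ≥0∞) = ENNReal.ofReal 2 by simp, ← ENNReal.ofReal_pow (by norm_num),
      ← ENNReal.ofReal_mul (by positivity)]
    congr 1
    rw [Real.rpow_sub (by norm_num), Real.rpow_one, div_pow, div_pow, one_pow,
      Real.div_rpow (by norm_num) (by positivity), Real.one_rpow, ← Real.rpow_natCast,
      ← Real.rpow_natCast, ← Real.rpow_natCast, ← Real.rpow_mul (by norm_num),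
      ← Real.rpow_mul (by norm_num), mul_comm s]
    push_cast
    rw [Real.rpow_add (by norm_num), Real.rpow_one]
    ring
  simp_rw [this]
  have hq : (2 : ℝ) ^ (1 - s) < 1 := Real.rpow_lt_one_of_one_lt_of_neg (by norm_num) (by linarith)
  exact (Summable.mul_left _ (summable_geometric_of_lt_one (by positivity) hq)).tsum_ofReal_ne_top

lemma slab_packing {V : Type*} [NormedAddCommGroup V] [InnerProductSpace ℝ V]
    [MeasurableSpace V] [BorelSpace V] (ν : Measure V) [ν.IsAddRightInvariant]
    (a : V) (ha : a ≠ 0) (b R δ : ℝ) (hδ : 0 < δ) :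
    ν ({u | |⟪a, u⟫ + b| ≤ δ} ∩ closedBall 0 R) * ENNReal.ofReal ‖a‖ ≤
      ENNReal.ofReal (3 * δ) * ν (closedBall 0 (R + 1)) := by
  have ha' : 0 < ‖a‖ := norm_pos_iff.2 ha
  set S := {u | |⟪a, u⟫ + b| ≤ δ} ∩ closedBall (0 : V) R with hS
  have hSm : MeasurableSet S :=
    ((isClosed_le (by fun_prop) (by fun_prop)).measurableSet).inter isClosed_closedBall.measurableSet
  set N := ⌊‖a‖ / (3 * δ)⌋₊
  let v : ℕ → V := fun j => (-(3 * δ * j / ‖a‖ ^ 2)) • a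
  have hin : ∀ j u, ⟪a, u + v j⟫ = ⟪a, u⟫ - 3 * δ * j := by
    intro j u
    simp only [v, inner_add_right, inner_smul_right, real_inner_self_eq_norm_sq]
    field_simp
    ring
  have hdis : ((Finset.range (N + 1) : Finset ℕ) : Set ℕ).PairwiseDisjoint
      (fun j => (fun u => u + v j) ⁻¹' S) := by
    intro i _ j _ hij
    refine Set.disjoint_left.2 fun u hi hj => ?_
    have h1 : |⟪a, u + v i⟫ + b| ≤ δ := hi.1
    have h2 : |⟪a, u + v j⟫ + b| ≤ δ := hj.1
    rw [hin, abs_le] at h1 h2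
    rcases lt_or_gt_of_ne hij with h | h
    · have : (i : ℝ) + 1 ≤ j := by exact_mod_cast h
      nlinarith
    · have : (j : ℝ) + 1 ≤ i := by exact_mod_cast h
      nlinarith
  have hsub : (⋃ j ∈ Finset.range (N + 1), (fun u => u + v j) ⁻¹' S) ⊆ closedBall 0 (R + 1) := by
    refine iUnion₂_subset fun j hj u hu => ?_
    have h1 : ‖u + v j‖ ≤ R := by simpa using hu.2
    have hjN : (j : ℝ) ≤ ‖a‖ / (3 * δ) :=
      (Nat.le_floor_iff (by positivity)).1 (Nat.lt_succ_iff.1 (Finset.mem_range.1 hj))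
    have h2 : ‖v j‖ ≤ 1 := by
      simp only [v, norm_smul, norm_neg]
      rw [Real.norm_of_nonneg (by positivity)]
      rw [le_div_iff₀ (by positivity)] at hjN
      rw [div_mul_eq_mul_div, div_le_one (by positivity)]
      nlinarith
    have : u = (u + v j) - v j := by abel
    rw [mem_closedBall_zero_iff, this]
    exact (norm_sub_le _ _).trans (by linarith)
  have hmeas := measure_biUnion_finset (μ := ν) hdis
    (fun j _ => (measurable_id.add_const (v j)) hSm)
  have hle := measure_mono (μ := ν) hsub
  rw [hmeas] at hle
  simp only [measure_preimage_add_right, Finset.sum_const, Finset.card_range, nsmul_eq_mul] at hle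
  have hfl : ‖a‖ ≤ 3 * δ * ((N + 1 : ℕ) : ℝ) := by
    have := (Nat.lt_floor_add_one (‖a‖ / (3 * δ))).le
    rw [div_le_iff₀ (by positivity)] at this
    push_cast
    linarith
  calc ν S * ENNReal.ofReal ‖a‖ ≤ ν S * ENNReal.ofReal (3 * δ * ((N + 1 : ℕ) : ℝ)) := by
        gcongr
    _ = ENNReal.ofReal (3 * δ) * (((N + 1 : ℕ) : ℝ≥0∞) * ν S) := by
        rw [ENNReal.ofReal_mul (by positivity), ENNReal.ofReal_natCast]; ring
    _ ≤ _ := by gcongr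

lemma slab_bound {V : Type*} [NormedAddCommGroup V] [InnerProductSpace ℝ V]
    [MeasurableSpace V] [BorelSpace V] (ν : Measure V) [ν.IsAddRightInvariant]
    (z : V × ℝ) (R δ : ℝ) (hR : 1 ≤ R) (hδ : 0 < δ) :
    ν ({u | |⟪z.1, u⟫ + z.2| ≤ δ} ∩ closedBall 0 R) * ENNReal.ofReal ‖z‖ ≤
      ENNReal.ofReal (6 * R) * ν (closedBall 0 (R + 1)) * ENNReal.ofReal δ := by
  obtain ⟨a, b⟩ := z
  simp only [Prod.norm_mk, Real.norm_eq_abs]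
  by_cases hab : 2 * R * ‖a‖ < |b|
  · have hmax : max ‖a‖ |b| = |b| := max_eq_right (by nlinarith [norm_nonneg a])
    rw [hmax]
    rcases Set.eq_empty_or_nonempty ({u | |⟪a, u⟫ + b| ≤ δ} ∩ closedBall (0 : V) R) with he | ⟨u, hu⟩
    · rw [he]; simp
    · have h1 : |⟪a, u⟫ + b| ≤ δ := hu.1
      have h2 : ‖u‖ ≤ R := by simpa using hu.2
      have h3 : |⟪a, u⟫| ≤ ‖a‖ * R :=
        (abs_real_inner_le_norm a u).trans (by gcongr)
      have h4 : |b| ≤ 2 * δ := by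
        have : |b| ≤ |⟪a, u⟫ + b| + |⟪a, u⟫| := by
          have := abs_sub (⟪a, u⟫ + b) (⟪a, u⟫)
          simpa using this
        nlinarith
      calc _ ≤ ν (closedBall 0 (R + 1)) * ENNReal.ofReal (6 * R * δ) := by
            gcongr
            · exact inter_subset_right.trans (closedBall_subset_closedBall (by linarith))
            · nlinarith
        _ = _ := by rw [ENNReal.ofReal_mul (by positivity)]; ring
  · push Not at hab
    have hmax : max ‖a‖ |b| ≤ 2 * R * ‖a‖ := max_le (by nlinarith [norm_nonneg a]) hab
    by_cases ha : a = 0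
    · subst ha
      have : max ‖(0 : V)‖ |b| ≤ 0 := by simpa using hmax
      rw [ENNReal.ofReal_of_nonpos this]; simp
    calc _ ≤ ν ({u | |⟪a, u⟫ + b| ≤ δ} ∩ closedBall 0 R) * ENNReal.ofReal (2 * R * ‖a‖) := by
          gcongr
      _ = ENNReal.ofReal (2 * R) *
          (ν ({u | |⟪a, u⟫ + b| ≤ δ} ∩ closedBall 0 R) * ENNReal.ofReal ‖a‖) := by
          rw [ENNReal.ofReal_mul (by positivity)]; ring
      _ ≤ ENNReal.ofReal (2 * R) * (ENNReal.ofReal (3 * δ) * ν (closedBall 0 (R + 1))) := by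
          exact mul_le_mul_right (slab_packing ν a ha b R δ hδ) _
      _ = _ := by
          rw [show (6 * R) = 2 * R * 3 by ring, ENNReal.ofReal_mul (p := 2 * R) (by positivity),
            ENNReal.ofReal_mul (p := 3) (by positivity)]
          ring

/-- A finite measure on `ℝ` with a.e. finite lower density (pulled back) is a.c. -/
lemma null_of_liminf {X : Type*} [MeasurableSpace X] (μ : Measure X) [IsFiniteMeasure μ]
    (p : X → ℝ) (hp : Measurable p)
    (h : ∀ᵐ x ∂μ, liminf (fun m : ℕ => μ (p ⁻¹' closedBall (p x) (1 / ((m : ℝ) + 1))) /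
      ENNReal.ofReal (1 / ((m : ℝ) + 1))) atTop < ⊤)
    (Q : Set ℝ) (hQ : volume Q = 0) : μ (p ⁻¹' Q) = 0 := by
  set ρ := μ.map p with hρ
  let G : ℕ → Set ℝ := fun N => {t | ∃ᶠ m : ℕ in atTop,
    ρ (closedBall t (1 / ((m : ℝ) + 1))) ≤ ((N : ℝ≥0∞) • (volume : Measure ℝ))
      (closedBall t (1 / ((m : ℝ) + 1)))}
  have hG : ∀ N, ρ (Q ∩ G N) = 0 := by
    intro N
    haveI : IsLocallyFiniteMeasure ((N : ℝ≥0∞) • (volume : Measure ℝ)) := by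
      rw [Nat.cast_smul_eq_nsmul]
      have : (N • (volume : Measure ℝ)) = (N : ℝ≥0) • (volume : Measure ℝ) := by
        rw [Nat.cast_smul_eq_nsmul]
      rw [this]
      infer_instance
    have h1 := (Besicovitch.vitaliFamily ρ).measure_le_of_frequently_le
      ((N : ℝ≥0∞) • (volume : Measure ℝ)) Measure.AbsolutelyContinuous.rfl (Q ∩ G N) ?_
    · refine le_antisymm (h1.trans ?_) zero_le
      have : volume (Q ∩ G N) = 0 := measure_mono_null inter_subset_left hQ
      simp [this]
    · intro t ht
      have ht2 := ht.2
      have hδ : Tendsto (fun m : ℕ => 1 / ((m : ℝ) + 1)) atTop (𝓝[>] 0) :=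
        tendsto_nhdsWithin_iff.2 ⟨tendsto_one_div_add_atTop_nhds_zero_nat,
          Eventually.of_forall fun m => by simp only [mem_Ioi]; positivity⟩
      exact ((Besicovitch.tendsto_filterAt ρ t).comp hδ).frequently ht2
  have hsub : p ⁻¹' Q ⊆ {x | ¬ liminf (fun m : ℕ => μ (p ⁻¹' closedBall (p x)
      (1 / ((m : ℝ) + 1))) / ENNReal.ofReal (1 / ((m : ℝ) + 1))) atTop < ⊤} ∪
      ⋃ N : ℕ, p ⁻¹' (Q ∩ G N) := by
    intro x hx
    by_cases hl : liminf (fun m : ℕ => μ (p ⁻¹' closedBall (p x)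
      (1 / ((m : ℝ) + 1))) / ENNReal.ofReal (1 / ((m : ℝ) + 1))) atTop < ⊤
    · right
      obtain ⟨N, hN⟩ := ENNReal.exists_nat_gt hl.ne
      refine mem_iUnion.2 ⟨N, hx, ?_⟩
      have hf := frequently_lt_of_liminf_lt (by isBoundedDefault) hN
      refine hf.mono fun m hm => ?_
      have hpos : (0 : ℝ) < 1 / ((m : ℝ) + 1) := by positivity
      have hm' := hm.le
      rw [ENNReal.div_le_iff (by simpa using hpos) (by simp)] at hm'
      rw [hρ, Measure.map_apply hp isClosed_closedBall.measurableSet, Measure.smul_apply,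
        Real.volume_closedBall, smul_eq_mul]
      refine hm'.trans ?_
      gcongr
      linarith
    · exact Or.inl hl
  refine measure_mono_null hsub (measure_union_null h (measure_iUnion_null fun N => ?_))
  exact le_antisymm ((Measure.le_map_apply hp.aemeasurable _).trans (hG N).le) zero_le

lemma proj_ac_ball {V : Type*} [NormedAddCommGroup V] [InnerProductSpace ℝ V]
    [FiniteDimensional ℝ V]
    [MeasurableSpace V] [BorelSpace V] (ν : Measure V) [ν.IsAddHaarMeasure]
    (μ : Measure (V × ℝ)) [IsFiniteMeasure μ] (C : ℝ≥0∞) (hC : C ≠ ⊤)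
    (h : ∀ᵐ x ∂μ, ∫⁻ y, (edist x y)⁻¹ ∂μ ≤ C) (R : ℝ) (hR : 1 ≤ R) :
    ∀ᵐ u ∂(ν.restrict (closedBall 0 R)), ∀ Q : Set ℝ, volume Q = 0 →
      μ ((fun p : V × ℝ => ⟪p.1, u⟫ + p.2) ⁻¹' Q) = 0 := by
  set ν' := ν.restrict (closedBall (0 : V) R) with hν'
  haveI : IsFiniteMeasure ν' := ⟨by
    rw [hν', Measure.restrict_apply_univ]; exact measure_closedBall_lt_top⟩
  let T : ℝ → Set ((V × (V × ℝ)) × (V × ℝ)) := fun δ =>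
    {w | |(⟪w.2.1, w.1.1⟫ + w.2.2) - (⟪w.1.2.1, w.1.1⟫ + w.1.2.2)| ≤ δ}
  have hT : ∀ δ, MeasurableSet (T δ) := fun δ =>
    (isClosed_le (by fun_prop) (by fun_prop)).measurableSet
  let d : ℕ → ℝ := fun m => 1 / ((m : ℝ) + 1)
  have hd : ∀ m, 0 < d m := fun m => by simp only [d]; positivity
  let f : ℕ → V × (V × ℝ) → ℝ≥0∞ := fun m z =>
    μ (Prod.mk z ⁻¹' T (d m)) / ENNReal.ofReal (d m)
  have hf : ∀ m, Measurable (f m) := fun m =>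
    (measurable_measure_prodMk_left (hT _)).div_const _
  set W := ENNReal.ofReal (6 * R) * ν (closedBall 0 (R + 1)) with hW
  have hWtop : W ≠ ⊤ := ENNReal.mul_ne_top ENNReal.ofReal_ne_top measure_closedBall_lt_top.ne
  have hW0 : W ≠ 0 := by
    refine mul_ne_zero ?_ (measure_closedBall_pos ν _ (by linarith)).ne'
    simp; linarith
  have hbound : ∀ m, ∫⁻ z, f m z ∂(ν'.prod μ) ≤ W * C * μ univ := by
    intro m
    rw [lintegral_prod_symm _ (hf m).aemeasurable]
    have hx : ∀ x, ∫⁻ u, f m (u, x) ∂ν' ≤ W * ∫⁻ y, (edist x y)⁻¹ ∂μ := by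
      intro x
      let Tx : Set (V × (V × ℝ)) := (fun w : V × (V × ℝ) => ((w.1, x), w.2)) ⁻¹' T (d m)
      have hTx : MeasurableSet Tx := (by fun_prop : Measurable
        (fun w : V × (V × ℝ) => ((w.1, x), w.2))) (hT _)
      have e1 : ∫⁻ u, f m (u, x) ∂ν' =
          (∫⁻ u, μ (Prod.mk u ⁻¹' Tx) ∂ν') * (ENNReal.ofReal (d m))⁻¹ := by
        rw [← lintegral_mul_const _ (measurable_measure_prodMk_left hTx)]
        rfl
      rw [e1, ← Measure.prod_apply hTx, Measure.prod_apply_symm hTx,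
        ← lintegral_mul_const _ (measurable_measure_prodMk_right hTx),
        ← lintegral_const_mul' _ _ hWtop]
      refine lintegral_mono fun y => ?_
      have hset : ν' ((fun u => (u, y)) ⁻¹' Tx) =
          ν ({u | |⟪(y - x).1, u⟫ + (y - x).2| ≤ d m} ∩ closedBall 0 R) := by
        rw [hν', Measure.restrict_apply' isClosed_closedBall.measurableSet]
        congr 2
        ext u
        simp only [Tx, T, mem_preimage, mem_ofPred_eq, Prod.fst_sub, Prod.snd_sub, inner_sub_left]
        ring_nf
      have hs := slab_bound ν (y - x) R (d m) hR (hd m)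
      rw [← hset, ← hW] at hs
      have hed : edist x y = ENNReal.ofReal ‖y - x‖ := by
        rw [edist_comm, edist_dist, dist_eq_norm]
      simp only
      rw [hed, ← div_eq_mul_inv, ← div_eq_mul_inv,
        ENNReal.div_le_iff (by simpa using hd m) (by simp)]
      by_cases h0 : ENNReal.ofReal ‖y - x‖ = 0
      · rw [h0, ENNReal.div_zero hW0, ENNReal.top_mul (by simpa using hd m)]
        exact le_top
      · rw [← ENNReal.le_div_iff_mul_le (Or.inl h0) (by simp)] at hs
        refine hs.trans (le_of_eq ?_)
        simp only [div_eq_mul_inv]; ring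
    calc _ ≤ ∫⁻ x, W * C ∂μ := by
          refine lintegral_mono_ae ?_
          filter_upwards [h] with x hxx
          exact (hx x).trans (by gcongr)
      _ = _ := by simp
  have hfatou : ∫⁻ z, liminf (fun m => f m z) atTop ∂(ν'.prod μ) ≠ ⊤ := by
    refine ne_top_of_le_ne_top (b := W * C * μ univ)
      (ENNReal.mul_ne_top (ENNReal.mul_ne_top hWtop hC) (measure_ne_top _ _)) ?_
    refine (lintegral_liminf_le hf).trans ?_
    refine (liminf_le_liminf (Eventually.of_forall hbound)).trans ?_
    simp
  have hae := ae_lt_top (Measurable.liminf hf) hfatou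
  have hae2 := Measure.ae_ae_of_ae_prod hae
  filter_upwards [hae2] with u hu Q hQ
  refine null_of_liminf μ _ (by fun_prop) ?_ Q hQ
  filter_upwards [hu] with x hx
  exact hx

lemma proj_ac {V : Type*} [NormedAddCommGroup V] [InnerProductSpace ℝ V]
    [FiniteDimensional ℝ V]
    [MeasurableSpace V] [BorelSpace V] (ν : Measure V) [ν.IsAddHaarMeasure]
    (μ : Measure (V × ℝ)) [IsFiniteMeasure μ] (C : ℝ≥0∞) (hC : C ≠ ⊤)
    (h : ∀ᵐ x ∂μ, ∫⁻ y, (edist x y)⁻¹ ∂μ ≤ C) :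
    ∀ᵐ u ∂ν, ∀ Q : Set ℝ, volume Q = 0 →
      μ ((fun p : V × ℝ => ⟪p.1, u⟫ + p.2) ⁻¹' Q) = 0 := by
  have hall : ∀ R : ℕ, ∀ᵐ u ∂ν, u ∈ closedBall (0 : V) ((R : ℝ) + 1) → ∀ Q : Set ℝ,
      volume Q = 0 → μ ((fun p : V × ℝ => ⟪p.1, u⟫ + p.2) ⁻¹' Q) = 0 := fun R =>
    (ae_restrict_iff' isClosed_closedBall.measurableSet).1
      (proj_ac_ball ν μ C hC h ((R : ℝ) + 1) (by linarith [R.cast_nonneg (α := ℝ)]))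
  filter_upwards [ae_all_iff.2 hall] with u hu
  obtain ⟨N, hN⟩ := exists_nat_ge ‖u‖
  exact hu N (by rw [mem_closedBall_zero_iff]; linarith)

/-- **Strong projection theorem for the dual maps `π_u`, positive measure part.**
If `E ⊆ ℝⁿ = ℝ^{n−1} × ℝ` is `𝓗ˢ`-measurable with `0 < 𝓗ˢ(E) < ∞` where
`s = dim_H E > 1`, then there is a Lebesgue null set `X ⊆ ℝ^{n−1}` such that for every
`u ∉ X` and every `𝓗ˢ`-measurable `F ⊆ E` with `𝓗ˢ(F) > 0`,
`𝓛¹(π_u(F)) > 0`. -/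
theorem strong_dualProj_positive_measure (n : ℕ) (hn : 2 ≤ n) (s : ℝ) (hs : 1 < s)
    (E : Set (EuclideanSpace ℝ (Fin (n - 1)) × ℝ))
    (hdimE : dimH E = ENNReal.ofReal s)
    (hE : NullMeasurableSet E μH[s])
    (hE0 : 0 < μH[s] E) (hEfin : μH[s] E < ⊤) :
    ∃ X : Set (EuclideanSpace ℝ (Fin (n - 1))), volume X = 0 ∧
      ∀ u : EuclideanSpace ℝ (Fin (n - 1)), u ∉ X →
        ∀ F : Set (EuclideanSpace ℝ (Fin (n - 1)) × ℝ), F ⊆ E →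
          NullMeasurableSet F μH[s] → 0 < μH[s] F →
          0 < volume (dualProj u '' F) := by
  set μ : Measure (EuclideanSpace ℝ (Fin (n - 1)) × ℝ) := (μH[s]).restrict E with hμ
  haveI : IsFiniteMeasure μ := ⟨by rw [hμ, Measure.restrict_apply_univ]; exact hEfin⟩
  let D : ℕ → Set (EuclideanSpace ℝ (Fin (n - 1)) × ℝ) := fun k =>
    {x | ∀ j : ℕ, μ (ball x ((1 / 2) ^ j)) ≤ k * ENNReal.ofReal ((1 / 2) ^ j) ^ s}
  have hD : ∀ k, MeasurableSet (D k) := by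
    intro k
    have : D k = ⋂ j : ℕ, {x | μ (ball x ((1 / 2) ^ j)) ≤
        k * ENNReal.ofReal ((1 / 2) ^ j) ^ s} := by ext; simp [D]
    rw [this]
    refine MeasurableSet.iInter fun j => measurableSet_le ?_ measurable_const
    have hm : MeasurableSet {w : (EuclideanSpace ℝ (Fin (n - 1)) × ℝ) ×
        (EuclideanSpace ℝ (Fin (n - 1)) × ℝ) | dist w.2 w.1 < (1 / 2) ^ j} :=
      (isOpen_lt (by fun_prop) (by fun_prop)).measurableSet
    exact measurable_measure_prodMk_left (ν := μ) hm
  have hnull : μ (⋃ k, D k)ᶜ = 0 := by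
    refine Measure.restrict_le_self.absolutelyContinuous
      (measure_mono_null ?_ (density_null μ s (by linarith)))
    intro x hx k
    have hxk : x ∉ D k := fun hk => hx (mem_iUnion.2 ⟨k, hk⟩)
    simp only [D, mem_ofPred_eq, not_forall, not_le] at hxk
    obtain ⟨j, hj⟩ := hxk
    exact ⟨(1 / 2) ^ j, by positivity, hj.trans_le (measure_mono ball_subset_closedBall)⟩
  have hac : ∀ k, ∀ᵐ u ∂(volume : Measure (EuclideanSpace ℝ (Fin (n - 1)))),
      ∀ Q : Set ℝ, volume Q = 0 → (μ.restrict (D k))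
        ((fun p : EuclideanSpace ℝ (Fin (n - 1)) × ℝ => ⟪p.1, u⟫ + p.2) ⁻¹' Q) = 0 := by
    intro k
    refine proj_ac volume (μ.restrict (D k)) _
      (potential_const_ne_top (μ univ) (measure_ne_top _ _) s hs k) ?_
    filter_upwards [ae_restrict_mem (hD k)] with x hx
    exact (lintegral_mono' Measure.restrict_le_self le_rfl).trans (potential_le μ s x k hx)
  refine ⟨_, ae_iff.1 (ae_all_iff.2 hac), fun u hu F hFE _ hF0 => ?_⟩
  simp only [mem_ofPred_eq, not_not] at hu
  rw [pos_iff_ne_zero]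
  intro hvol
  have hsub : F ⊆ (⋃ k, D k)ᶜ ∪ ⋃ k, (F ∩ D k) := by
    intro x hx
    by_cases h : x ∈ ⋃ k, D k
    · obtain ⟨k, hk⟩ := mem_iUnion.1 h
      exact Or.inr (mem_iUnion.2 ⟨k, hx, hk⟩)
    · exact Or.inl h
  have hFμ : μ F = 0 := by
    refine measure_mono_null hsub (measure_union_null hnull (measure_iUnion_null fun k => ?_))
    have h1 := hu k _ hvol
    rw [Measure.restrict_apply' (hD k)] at h1
    refine measure_mono_null ?_ h1
    exact inter_subset_inter_left _ fun x hx => ⟨x, hx, rfl⟩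
  rw [hμ, Measure.restrict_apply₀' hE, inter_eq_self_of_subset_left hFE] at hFμ
  exact hF0.ne' hFμ
end
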